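/- Let u ∈ C^{2s+α}(B₁) ∩ ℒ_s(ℝⁿ) for some α > 0 with 2s+α not an integer. Suppose u is antisymmetric, u ≥ 0 in ℝⁿ₊, and (−Δ)^s u = 0 pointwise in B₁⁺. Then there exists C ≥ 1 depending only on n and s such that sup_{x∈B_{1/2}⁺} u(x)/x₁ ≤ C · inf_{x∈B_{1/2}⁺} u(x)/x₁, and moreover C⁻¹‖u‖_{𝒜_s(ℝⁿ)} ≤ inf_{x∈B_{1/2}⁺} u(x)/x₁ ≤ sup_{x∈B_{1/2}⁺} u(x)/x₁ ≤ C‖u‖_{𝒜_s(ℝⁿ)}. -/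

import Mathlib

/-!
The proof is two barrier arguments, both run on the truncated integrals
`truncInt`, `∫_{|x-y| ≥ ε} (v(x) - v(y)) |x-y|^(-n-2s) dy`, whose limit as `ε → 0⁺` is zero for
`v = u` at every point of `B₁⁺`. Of the regularity of `u` only continuity in `B₁` matters.

For antisymmetric `v` the truncated integral folds onto the half space (`trunc_fold`), producing
the kernel `|x-y|^(-n-2s) - |x_*-y|^(-n-2s)`. As `|x_*-y|² = |x-y|² + 4x₁y₁`, this kernel is bounded
below by a multiple of `x₁y₁/(1+|y|^(n+2s+2))`, and above by such a multiple away from `x`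
(`kernel_lower`, `kernel_upper`). This is how the weight of `‖u‖_𝒜` enters.

*Lower bound* (`lower_bound`). The barrier `φ = x₁(9/16-|x|²)₊` satisfies `(-Δ)ˢφ ≤ C x₁` on its
support (`trunc_phi_le`). If `u - tφ` with `t = c‖u‖_𝒜` were negative somewhere in `ℝⁿ₊`, then at its
minimum `x` the folded integral would be at most `-c₀ x₁ (‖u‖_𝒜 - t‖φ‖_𝒜)`
(`fold_le_of_min`). For small `c` this makes the truncated integrals of `u` at `x` negative, uniformly
in `ε`, which is impossible. Hence `u ≥ c‖u‖_𝒜 φ`.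

*Upper bound* (`upper_bound`). Suppose `u ≤ tψ` fails in `B_{3/4}⁺`, where
`ψ = x₁(9/16-|x|²)^(-n-2)`. Then `u - tψ` has a positive maximum `m` at some `x`
(`exists_touching`). Put `D = 9/16-|x|²` and `r = θD`. In `B_r(x)` the function `ψ` lies below
`D^(-n-2)` times the antisymmetric polynomial `polyQ`, by second order expansion (`inv_pow_le`). The
difference `v` of `u` and the polynomial cut off to `B_r(x) ∪ B_r(x_*)` is at most `m = v(x)` in
`B_r(x) ∩ ℝⁿ₊` and equals `u ≥ 0` in the rest of `ℝⁿ₊`, so its truncated integrals are at least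
`-C r^(-n-2s-2) x₁ ‖u‖_𝒜` (`fold_ge_of_max`). Those of the cut off polynomial are at least
`c r^(-2s) x₁` when `θ` is small (`trunc_cutQ_ge`), since averaging over the four points
`x ± h`, `x ± h_*` leaves an error of order `x₁|h|²/D²`. Both terms scale
like `D^(-n-2s-2)`, so a large ratio `t/‖u‖_𝒜` contradicts `(-Δ)ˢu(x) = 0`.

On `B_{1/2}⁺` both barriers are comparable to `x₁`, which gives the two-sided estimate by
`‖u‖_𝒜`, and the Harnack inequality follows from it.
-/

open MeasureTheory Metric Filter Topology

noncomputable section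

/-- Euclidean space `ℝⁿ`. -/
abbrev Euc (n : ℕ) := EuclideanSpace ℝ (Fin n)

/-- Reflection `x ↦ x_* = (-x₁, x')` across the hyperplane `{x₁ = 0}`. -/
def reflFirst (n : ℕ) [NeZero n] (x : Euc n) : Euc n :=
  x - (2 * x 0) • EuclideanSpace.single 0 1

/-- The open half space `ℝⁿ₊ = {x : x₁ > 0}`. -/
def halfSpace (n : ℕ) [NeZero n] : Set (Euc n) := {x | 0 < x 0}

/-- `u` is antisymmetric: `u(x_*) = -u(x)`. -/
def AntiSymmFn (n : ℕ) [NeZero n] (u : Euc n → ℝ) : Prop :=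
  ∀ x, u (reflFirst n x) = - u x

/-- The normalising constant `c_{n,s}` of the fractional Laplacian. -/
def cns (n : ℕ) (s : ℝ) : ℝ :=
  s * (4 : ℝ) ^ s * Real.Gamma (((n : ℝ) + 2 * s) / 2) /
    (Real.pi ^ ((n : ℝ) / 2) * Real.Gamma (1 - s))

/-- The constant `γ_{n,s}` of the mean value formula. -/
def gammans (n : ℕ) (s : ℝ) : ℝ :=
  Real.sin (Real.pi * s) * Real.Gamma ((n : ℝ) / 2) / Real.pi ^ ((n : ℝ) / 2 + 1)

/-- The first standard basis vector `e₁`. -/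
def e1 (n : ℕ) [NeZero n] : Euc n := EuclideanSpace.single 0 1

/-- `‖u‖_{𝒜ₛ(ℝⁿ)} = ∫_{ℝⁿ₊} x₁|u(x)|/(1+|x|^{n+2s+2}) dx`. -/
def ANorm (n : ℕ) [NeZero n] (s : ℝ) (u : Euc n → ℝ) : ℝ :=
  ∫ x in halfSpace n, x 0 * |u x| / (1 + ‖x‖ ^ ((n : ℝ) + 2 * s + 2))

/-- `u ∈ 𝒜ₛ(ℝⁿ)`. -/
def MemA (n : ℕ) [NeZero n] (s : ℝ) (u : Euc n → ℝ) : Prop :=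
  AntiSymmFn n u ∧ LocallyIntegrable u volume ∧
    IntegrableOn (fun x => x 0 * |u x| / (1 + ‖x‖ ^ ((n : ℝ) + 2 * s + 2))) (halfSpace n) volume

/-- `u ∈ ℒₛ(ℝⁿ)`. -/
def MemL (n : ℕ) (s : ℝ) (u : Euc n → ℝ) : Prop :=
  LocallyIntegrable u volume ∧
    Integrable (fun x => |u x| / (1 + ‖x‖ ^ ((n : ℝ) + 2 * s))) volume

/-- Membership in the Hölder space `C^β = C^{⌊β⌋, β-⌊β⌋}` on `Ω`. -/
def MemHolderOn {X : Type*} [NormedAddCommGroup X] [NormedSpace ℝ X]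
    (β : ℝ) (Ω : Set X) (u : X → ℝ) : Prop :=
  ContDiffOn ℝ (⌊β⌋₊ : ℕ) u Ω ∧
    ∃ C : NNReal, HolderOnWith C (β - ⌊β⌋₊).toNNReal (iteratedFDerivWithin ℝ ⌊β⌋₊ u Ω) Ω

/-- `K` bounds the `C^β = C^{⌊β⌋, β-⌊β⌋}` norm of `u` on `Ω`. -/
def HolderBoundBy {X : Type*} [NormedAddCommGroup X] [NormedSpace ℝ X]
    (β : ℝ) (Ω : Set X) (u : X → ℝ) (K : ℝ) : Prop :=
  (∀ i ≤ ⌊β⌋₊, ∀ x ∈ Ω, ‖iteratedFDerivWithin ℝ i u Ω x‖ ≤ K) ∧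
    HolderOnWith K.toNNReal (β - ⌊β⌋₊).toNNReal (iteratedFDerivWithin ℝ ⌊β⌋₊ u Ω) Ω

/-- `β` is not an integer. -/
def NotInteger (β : ℝ) : Prop := ∀ k : ℤ, β ≠ k

/-- The antisymmetric kernel `|x-y|^{-n-2s} - |x_*-y|^{-n-2s}`. -/
def aKernel (n : ℕ) [NeZero n] (s : ℝ) (x y : Euc n) : ℝ :=
  ‖x - y‖ ^ (-((n : ℝ) + 2 * s)) - ‖reflFirst n x - y‖ ^ (-((n : ℝ) + 2 * s))

/-- `(-Δ)ˢ u (x) = L` in the antisymmetric sense of Definition 1.4: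
the truncated integrals over `ℝⁿ₊ ∖ B_ε(x)` (plus the constant zero-th order term)
converge to `L` as `ε → 0⁺`. -/
def HasAntiFracLap (n : ℕ) [NeZero n] (s : ℝ) (u : Euc n → ℝ) (x : Euc n) (L : ℝ) : Prop :=
  Filter.Tendsto
    (fun ε : ℝ =>
      cns n s * (∫ y in halfSpace n \ Metric.ball x ε, aKernel n s x y * (u x - u y)) +
        (cns 1 s / s) * u x * (x 0) ^ (-(2 * s)))
    (𝓝[>] (0 : ℝ)) (𝓝 L)

/-- `(-Δ)ˢ u (x) = L` in the principal value sense. -/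
def HasPVFracLap (n : ℕ) (s : ℝ) (u : Euc n → ℝ) (x : Euc n) (L : ℝ) : Prop :=
  Filter.Tendsto
    (fun ε : ℝ =>
      cns n s * ∫ y in (Metric.ball x ε)ᶜ, (u x - u y) / ‖x - y‖ ^ ((n : ℝ) + 2 * s))
    (𝓝[>] (0 : ℝ)) (𝓝 L)

/-! ### Reflection and the half space -/

/-- The reflection `reflFirst` as a linear isometry of `ℝⁿ`. -/
def reflIso (n : ℕ) [NeZero n] : Euc n ≃ₗᵢ[ℝ] Euc n :=
  ((ℝ ∙ (EuclideanSpace.single 0 1 : Euc n))ᗮ).reflection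

lemma reflIso_apply (n : ℕ) [NeZero n] (x : Euc n) : reflIso n x = reflFirst n x := by
  rw [reflIso, Submodule.reflection_orthogonal_apply, Submodule.reflection_singleton_apply]
  simp [reflFirst, EuclideanSpace.inner_single_left, mul_smul, two_smul]

section geometry
variable {n : ℕ} [NeZero n]

lemma refl_zero (x : Euc n) : (reflFirst n x) 0 = - x 0 := by
  simp [reflFirst]; ring

lemma refl_refl (x : Euc n) : reflFirst n (reflFirst n x) = x := by
  rw [← reflIso_apply, ← reflIso_apply, reflIso, Submodule.reflection_reflection]

lemma refl_norm (x : Euc n) : ‖reflFirst n x‖ = ‖x‖ := by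
  rw [← reflIso_apply, LinearIsometryEquiv.norm_map]

lemma refl_sub (x y : Euc n) : reflFirst n (x - y) = reflFirst n x - reflFirst n y := by
  simp only [← reflIso_apply, map_sub]

lemma norm_sub_refl (x y : Euc n) : ‖x - reflFirst n y‖ = ‖reflFirst n x - y‖ := by
  rw [← refl_norm (x - reflFirst n y), refl_sub, refl_refl]

/-- `|x_* - y|² = |x - y|² + 4 x₁ y₁`. -/
lemma norm_refl_sub_sq (x y : Euc n) :
    ‖reflFirst n x - y‖ ^ 2 = ‖x - y‖ ^ 2 + 4 * x 0 * y 0 := by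
  have : reflFirst n x - y = (x - y) - (2 * x 0) • EuclideanSpace.single 0 1 := by
    simp [reflFirst]; abel
  rw [this, norm_sub_sq_real, inner_smul_right, EuclideanSpace.inner_single_right, norm_smul,
    mul_pow]
  simp [mul_pow]
  ring

lemma coord_le_norm (x : Euc n) : |x 0| ≤ ‖x‖ := by
  simpa using PiLp.norm_apply_le x 0

lemma norm_sub_le_refl {x y : Euc n} (hx : 0 < x 0) (hy : 0 ≤ y 0) :
    ‖x - y‖ ≤ ‖reflFirst n x - y‖ := by
  have := norm_refl_sub_sq x y
  have h2 : 0 ≤ x 0 * y 0 := by positivity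
  exact le_of_sq_le_sq (by linarith) (norm_nonneg _)

lemma coord_lt_refl {x y : Euc n} (hx : 0 < x 0) (hy : 0 < y 0) :
    x 0 < ‖reflFirst n x - y‖ := by
  have := coord_le_norm (reflFirst n x - y)
  have h : (reflFirst n x - y) 0 = -(x 0) - y 0 := by simp [refl_zero]
  rw [h, abs_of_neg (by linarith)] at this
  linarith

lemma refl_measurePreserving : MeasurePreserving (reflFirst n) volume volume := by
  have := (reflIso n).measurePreserving
  have h : (⇑(reflIso n)) = reflFirst n := funext (reflIso_apply n)
  rwa [h] at this

lemma refl_measurableEmbedding : MeasurableEmbedding (reflFirst n) := by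
  have := (reflIso n).toHomeomorph.measurableEmbedding
  have h : (⇑(reflIso n).toHomeomorph) = reflFirst n := funext (reflIso_apply n)
  rwa [h] at this

lemma continuous_coord : Continuous (fun x : Euc n => x 0) := by fun_prop

lemma measurableSet_halfSpace : MeasurableSet (halfSpace n) :=
  (isOpen_lt continuous_const continuous_coord).measurableSet

/-- The hyperplane `{x₁ = 0}` is a null set. -/
lemma hyperplane_null : (volume : Measure (Euc n)) {x | x 0 = 0} = 0 := by
  let f : Euc n →ₗ[ℝ] ℝ := (EuclideanSpace.proj (0 : Fin n) : Euc n →L[ℝ] ℝ).toLinearMap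
  have hf : (f.ker : Set (Euc n)) = {x | x 0 = 0} := by
    ext x; simp [f]
  rw [← hf]
  apply Measure.addHaar_submodule
  intro h
  have : (EuclideanSpace.single 0 1 : Euc n) ∈ f.ker := by rw [h]; trivial
  simp [f] at this

/-- Folding an integral over `ℝⁿ` onto the half space. -/
lemma integral_fold {F : Euc n → ℝ} (hF : Integrable F) :
    ∫ y, F y = ∫ y in halfSpace n, (F y + F (reflFirst n y)) := by
  have hF' : Integrable (fun y => F (reflFirst n y)) :=
    (refl_measurePreserving.integrable_comp_emb refl_measurableEmbedding).2 hF
  rw [integral_add hF.integrableOn hF'.integrableOn,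
    ← integral_add_compl measurableSet_halfSpace hF]
  congr 1
  have h := refl_measurePreserving.setIntegral_preimage_emb refl_measurableEmbedding F
    (reflFirst n ⁻¹' halfSpace n)
  have h2 : reflFirst n ⁻¹' (reflFirst n ⁻¹' halfSpace n) = halfSpace n := by
    ext x; simp [refl_refl]
  rw [h2] at h
  rw [h]
  apply setIntegral_congr_set
  have hne : ∀ᵐ y : Euc n, y 0 ≠ 0 := by
    rw [ae_iff]; simpa using hyperplane_null (n := n)
  filter_upwards [hne] with y hy
  apply propext
  change y ∈ (halfSpace n)ᶜ ↔ y ∈ reflFirst n ⁻¹' halfSpace n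
  simp only [halfSpace, Set.mem_compl_iff, Set.mem_ofPred_eq, Set.mem_preimage, refl_zero]
  constructor
  · intro h
    have : y 0 < 0 := lt_of_le_of_ne (not_lt.1 h) hy
    linarith
  · intro h; linarith

end geometry

/-! ### Kernel bounds and integrability -/

/-- Convexity of `τ² ↦ (τ²)^(-N/2)`: the graph lies above its tangent at `1`. -/
lemma tangent_aux {N τ : ℝ} (hN : 0 < N) (hτ : 0 < τ) :
    1 - N / 2 * (τ ^ 2 - 1) ≤ τ ^ (-N) := by
  have h1 : 1 + Real.log τ * (-N) ≤ τ ^ (-N) := by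
    rw [Real.rpow_def_of_pos hτ]
    linarith [Real.add_one_le_exp (Real.log τ * -N)]
  have h2 : Real.log τ ≤ (τ ^ 2 - 1) / 2 := by
    have := Real.log_le_sub_one_of_pos (pow_pos hτ 2)
    rw [Real.log_pow] at this
    push_cast at this
    linarith
  nlinarith

lemma tangent_pow {N d e : ℝ} (hN : 0 < N) (hd : 0 < d) (he : 0 < e) :
    1 / d ^ N - N / 2 * (e ^ 2 - d ^ 2) / d ^ (N + 2) ≤ 1 / e ^ N := by
  have h := tangent_aux hN (div_pos he hd)
  rw [Real.rpow_neg (by positivity), Real.div_rpow he.le hd.le] at h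
  rw [Real.rpow_add hd, Real.rpow_two]
  have hp : 0 < d ^ N := by positivity
  have hq : 0 < e ^ N := by positivity
  have := mul_le_mul_of_nonneg_right h (le_of_lt (one_div_pos.2 hp))
  calc _ = (1 - N / 2 * ((e / d) ^ 2 - 1)) * (1 / d ^ N) := by field_simp
    _ ≤ _ := this
    _ = _ := by field_simp

lemma one_add_rpow_le {q t : ℝ} (hq : 0 < q) (ht : 0 ≤ t) :
    (1 + t) ^ q ≤ 2 ^ q * (1 + t ^ q) := by
  have h0 : 0 ≤ t ^ q := by positivity
  have h2 : (0:ℝ) < 2 ^ q := by positivity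
  rcases le_total t 1 with h | h
  · calc (1 + t) ^ q ≤ 2 ^ q := Real.rpow_le_rpow (by linarith) (by linarith) hq.le
      _ ≤ _ := by nlinarith
  · calc (1 + t) ^ q ≤ (2 * t) ^ q := Real.rpow_le_rpow (by linarith) (by linarith) hq.le
      _ = 2 ^ q * t ^ q := Real.mul_rpow (by norm_num) ht
      _ ≤ _ := by nlinarith

lemma one_add_rpow_ge {q t : ℝ} (hq : 0 < q) (ht : 0 ≤ t) :
    1 + t ^ q ≤ 2 * (1 + t) ^ q := by
  have h1 : t ^ q ≤ (1 + t) ^ q := Real.rpow_le_rpow ht (by linarith) hq.le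
  have h2 : 1 ≤ (1 + t) ^ q := Real.one_le_rpow (by linarith) hq.le
  linarith

section kernel
variable {n : ℕ} [NeZero n]

/-- Lower bound for the antisymmetrised kernel at a point of `B₁⁺`. -/
lemma kernel_lower {N : ℝ} (hN : 0 < N) {x y : Euc n} (hx : 0 < x 0) (hx1 : ‖x‖ ≤ 1)
    (hy : 0 < y 0) (hxy : x ≠ y) :
    2 * N / 2 ^ (N + 2) * x 0 * (y 0 / (1 + ‖y‖ ^ (N + 2))) ≤
      1 / ‖x - y‖ ^ N - 1 / ‖reflFirst n x - y‖ ^ N := by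
  have hd : 0 < ‖x - y‖ := norm_pos_iff.2 (sub_ne_zero.2 hxy)
  have he : 0 < ‖reflFirst n x - y‖ := hd.trans_le (norm_sub_le_refl hx hy.le)
  have h := tangent_pow hN he hd
  rw [norm_refl_sub_sq] at h
  have hle : ‖reflFirst n x - y‖ ^ (N + 2) ≤ 2 ^ (N + 2) * (1 + ‖y‖ ^ (N + 2)) := by
    refine le_trans (Real.rpow_le_rpow he.le ?_ (by linarith))
      (one_add_rpow_le (by linarith) (norm_nonneg y))
    refine (norm_sub_le _ _).trans ?_
    rw [refl_norm]; linarith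
  have hp : 0 < ‖reflFirst n x - y‖ ^ (N + 2) := by positivity
  have key : 2 * N / 2 ^ (N + 2) * x 0 * (y 0 / (1 + ‖y‖ ^ (N + 2))) ≤
      2 * N * x 0 * y 0 / ‖reflFirst n x - y‖ ^ (N + 2) := by
    calc _ = 2 * N * x 0 * y 0 / (2 ^ (N + 2) * (1 + ‖y‖ ^ (N + 2))) := by
          field_simp
      _ ≤ _ := by gcongr
  have e : N / 2 * (‖x - y‖ ^ 2 - (‖x - y‖ ^ 2 + 4 * x 0 * y 0)) / ‖reflFirst n x - y‖ ^ (N + 2)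
      = -(2 * N * x 0 * y 0 / ‖reflFirst n x - y‖ ^ (N + 2)) := by ring
  rw [e] at h
  linarith

/-- Upper bound for the antisymmetrised kernel at distance at least `r` from the pole. -/
lemma kernel_upper {N r : ℝ} (hN : 0 < N) (hr : 0 < r) (hr1 : r ≤ 1) {x y : Euc n}
    (hx : 0 < x 0) (hx1 : ‖x‖ ≤ 1) (hy : 0 < y 0) (hxy : r ≤ ‖x - y‖) :
    1 / ‖x - y‖ ^ N - 1 / ‖reflFirst n x - y‖ ^ N ≤
      4 * N * (3 / r) ^ (N + 2) * x 0 * (y 0 / (1 + ‖y‖ ^ (N + 2))) := by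
  have hd : 0 < ‖x - y‖ := hr.trans_le hxy
  have he : 0 < ‖reflFirst n x - y‖ := hd.trans_le (norm_sub_le_refl hx hy.le)
  have h := tangent_pow hN hd he
  rw [norm_refl_sub_sq] at h
  have h1 : 1 + ‖y‖ ≤ 3 / r * ‖x - y‖ := by
    have h2 : ‖y‖ ≤ ‖x - y‖ + 1 := by
      have : y = x - (x - y) := by abel
      calc ‖y‖ = ‖x - (x - y)‖ := by rw [← this]
        _ ≤ ‖x‖ + ‖x - y‖ := norm_sub_le _ _
        _ ≤ _ := by linarith
    rw [div_mul_eq_mul_div, le_div_iff₀ hr]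
    nlinarith [norm_nonneg y]
  have hle : 1 + ‖y‖ ^ (N + 2) ≤ 2 * ((3 / r) ^ (N + 2) * ‖x - y‖ ^ (N + 2)) := by
    refine (one_add_rpow_ge (by linarith) (norm_nonneg y)).trans ?_
    rw [← Real.mul_rpow (by positivity) hd.le]
    have := Real.rpow_le_rpow (by positivity) h1 (by linarith : 0 ≤ N + 2)
    linarith
  have hp : 0 < ‖x - y‖ ^ (N + 2) := by positivity
  have hq : 0 < 1 + ‖y‖ ^ (N + 2) := by positivity
  have key : 2 * N * x 0 * y 0 / ‖x - y‖ ^ (N + 2) ≤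
      4 * N * (3 / r) ^ (N + 2) * x 0 * (y 0 / (1 + ‖y‖ ^ (N + 2))) := by
    rw [mul_div_assoc', div_le_div_iff₀ hp hq]
    have := mul_le_mul_of_nonneg_left hle (by positivity : 0 ≤ 2 * N * x 0 * y 0)
    linarith
  have e : N / 2 * (‖x - y‖ ^ 2 + 4 * x 0 * y 0 - ‖x - y‖ ^ 2) / ‖x - y‖ ^ (N + 2)
      = (2 * N * x 0 * y 0 / ‖x - y‖ ^ (N + 2)) := by ring
  rw [e] at h
  linarith

end kernel

section integrability
variable {n : ℕ} [NeZero n]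

lemma integrable_weight {N : ℝ} (hN : (n : ℝ) < N) :
    Integrable (fun y : Euc n => 1 / (1 + ‖y‖ ^ N)) := by
  have hN0 : 0 < N := lt_of_le_of_lt (Nat.cast_nonneg n) hN
  have h := (integrable_one_add_norm (E := Euc n) (μ := volume) (r := N) (by simpa using hN)).const_mul
    ((2:ℝ) ^ N)
  refine h.mono' (Measurable.aestronglyMeasurable (by fun_prop)) (Eventually.of_forall fun y => ?_)
  rw [Real.norm_of_nonneg (by positivity), Real.rpow_neg (by positivity), ← div_eq_mul_inv,
    div_le_div_iff₀ (by positivity) (by positivity), one_mul]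
  exact one_add_rpow_le hN0 (norm_nonneg y)

/-- Away from its pole the kernel `|x - y|^(-N)` is controlled by the weight of `ℒₛ`. -/
lemma kernel_weight {N ε : ℝ} (hN : 0 < N) (hε : 0 < ε) (x : Euc n) :
    ∃ C : ℝ, 0 ≤ C ∧ ∀ y ∈ (ball x ε)ᶜ, 1 / ‖x - y‖ ^ N ≤ C * (1 / (1 + ‖y‖ ^ N)) := by
  set A := 1 + (1 + ‖x‖) / ε with hA
  refine ⟨2 * A ^ N, by positivity, fun y hy => ?_⟩
  have hd : ε ≤ ‖x - y‖ := by
    simpa [dist_eq_norm, norm_sub_rev] using hy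
  have hd0 : 0 < ‖x - y‖ := hε.trans_le hd
  have h1 : 1 + ‖y‖ ≤ A * ‖x - y‖ := by
    have h2 : ‖y‖ ≤ ‖x‖ + ‖x - y‖ := by
      have : y = x - (x - y) := by abel
      calc ‖y‖ = ‖x - (x - y)‖ := by rw [← this]
        _ ≤ ‖x‖ + ‖x - y‖ := norm_sub_le _ _
    have h3 : 1 + ‖x‖ ≤ (1 + ‖x‖) / ε * ‖x - y‖ := by
      rw [div_mul_eq_mul_div, le_div_iff₀ hε]
      gcongr
    rw [hA, add_mul]; linarith
  have hle : 1 + ‖y‖ ^ N ≤ 2 * (A ^ N * ‖x - y‖ ^ N) := by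
    refine (one_add_rpow_ge hN (norm_nonneg y)).trans ?_
    rw [← Real.mul_rpow (by positivity) hd0.le]
    have := Real.rpow_le_rpow (by positivity) h1 hN.le
    linarith
  have hp : 0 < ‖x - y‖ ^ N := by positivity
  rw [mul_one_div, div_le_div_iff₀ hp (by positivity)]
  linarith

/-- The truncated integrals defining the fractional Laplacian converge absolutely. -/
lemma integrableOn_trunc {s ε : ℝ} (hs : 0 < s) (hε : 0 < ε) {v : Euc n → ℝ} (hv : MemL n s v)
    (c : ℝ) (x : Euc n) :
    IntegrableOn (fun y => (c - v y) / ‖x - y‖ ^ ((n : ℝ) + 2 * s)) (ball x ε)ᶜ := by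
  have hN : (n : ℝ) < (n : ℝ) + 2 * s := by linarith
  have hN0 : 0 < (n : ℝ) + 2 * s := lt_of_le_of_lt (Nat.cast_nonneg n) hN
  obtain ⟨C, hC, hK⟩ := kernel_weight hN0 hε x
  have hd : Integrable (fun y : Euc n => C * (|c| * (1 / (1 + ‖y‖ ^ ((n : ℝ) + 2 * s))) +
      |v y| / (1 + ‖y‖ ^ ((n : ℝ) + 2 * s)))) :=
    (((integrable_weight hN).const_mul |c|).add hv.2).const_mul C
  refine hd.integrableOn.mono' ?_ ?_
  · have hm := hv.1.aestronglyMeasurable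
    refine AEStronglyMeasurable.restrict ?_
    refine AEStronglyMeasurable.div₀ (aestronglyMeasurable_const.sub hm) ?_
    exact Measurable.aestronglyMeasurable (by fun_prop)
  · refine (ae_restrict_iff' measurableSet_ball.compl).2 (Eventually.of_forall fun y hy => ?_)
    have h1 := hK y hy
    have h0 : 0 ≤ ‖x - y‖ ^ ((n : ℝ) + 2 * s) := by positivity
    rw [norm_div, Real.norm_of_nonneg h0, Real.norm_eq_abs]
    have h2 : |c - v y| ≤ |c| + |v y| := abs_sub _ _
    calc |c - v y| / ‖x - y‖ ^ ((n : ℝ) + 2 * s)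
        = |c - v y| * (1 / ‖x - y‖ ^ ((n : ℝ) + 2 * s)) := by ring
      _ ≤ (|c| + |v y|) * (C * (1 / (1 + ‖y‖ ^ ((n : ℝ) + 2 * s)))) := by gcongr
      _ = _ := by ring

lemma integrableOn_ANorm {s : ℝ} (hs : 0 < s) {u : Euc n → ℝ} (hu : MemL n s u) :
    IntegrableOn (fun x => x 0 * |u x| / (1 + ‖x‖ ^ ((n : ℝ) + 2 * s + 2))) (halfSpace n) := by
  have hN0 : 0 < (n : ℝ) + 2 * s := by positivity
  refine (hu.2.const_mul 2).integrableOn.mono' ?_ ?_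
  · have hm := hu.1.aestronglyMeasurable.norm
    refine AEStronglyMeasurable.restrict ?_
    refine AEStronglyMeasurable.div₀ (AEStronglyMeasurable.mul ?_ hm) ?_
    · exact Measurable.aestronglyMeasurable (by fun_prop)
    · exact Measurable.aestronglyMeasurable (by fun_prop)
  · refine Eventually.of_forall fun y => ?_
    generalize hN : (n : ℝ) + 2 * s = N at *
    rw [norm_div, norm_mul, Real.norm_of_nonneg (by positivity : (0:ℝ) ≤ 1 + ‖y‖ ^ (N + 2)),
      Real.norm_eq_abs, Real.norm_eq_abs, abs_abs]
    have h1 := coord_le_norm y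
    have key : ‖y‖ * (1 + ‖y‖ ^ N) ≤ 2 * (1 + ‖y‖ ^ (N + 2)) := by
      rcases le_total ‖y‖ 1 with h | h
      · have h2 : ‖y‖ ^ N ≤ 1 := Real.rpow_le_one (norm_nonneg y) h hN0.le
        have h3 : 0 ≤ ‖y‖ ^ (N + 2) := by positivity
        have h4 : 0 ≤ ‖y‖ ^ N := by positivity
        nlinarith [norm_nonneg y]
      · have h2 : 1 ≤ ‖y‖ ^ N := Real.one_le_rpow h hN0.le
        rw [Real.rpow_add (by linarith), Real.rpow_two]
        have h5 : ‖y‖ ≤ ‖y‖ ^ 2 := by nlinarith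
        nlinarith [norm_nonneg y]
    rw [mul_div_assoc', div_le_div_iff₀ (by positivity) (by positivity)]
    have := mul_le_mul_of_nonneg_left key (abs_nonneg (u y))
    have h6 : |y 0| * |u y| * (1 + ‖y‖ ^ N) ≤ ‖y‖ * |u y| * (1 + ‖y‖ ^ N) := by gcongr
    linarith

end integrability

/-! ### Folding and symmetrising the truncated integral -/

/-- The truncated integral `∫_{|x-y| ≥ ε} (v(x) - v(y)) |x-y|^(-n-2s) dy`. -/
def truncInt (n : ℕ) (s : ℝ) (v : Euc n → ℝ) (x : Euc n) (ε : ℝ) : ℝ :=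
  ∫ y in (ball x ε)ᶜ, (v x - v y) / ‖x - y‖ ^ ((n : ℝ) + 2 * s)

section fold
variable {n : ℕ} [NeZero n]

/-- The integrand obtained by folding `truncInt` of an antisymmetric function onto `ℝⁿ₊`. -/
def foldIntegrand (s : ℝ) (v : Euc n → ℝ) (x : Euc n) (ε : ℝ) (y : Euc n) : ℝ :=
  (ball x ε)ᶜ.indicator (fun y => (v x - v y) / ‖x - y‖ ^ ((n : ℝ) + 2 * s)) y +
    (v x + v y) / ‖reflFirst n x - y‖ ^ ((n : ℝ) + 2 * s)

lemma trunc_fold {s ε : ℝ} (hs : 0 < s) (hε : 0 < ε) {v : Euc n → ℝ} (hv : MemL n s v)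
    (ha : AntiSymmFn n v) {x : Euc n} (hx : ε ≤ x 0) :
    IntegrableOn (foldIntegrand s v x ε) (halfSpace n) ∧
      truncInt n s v x ε = ∫ y in halfSpace n, foldIntegrand s v x ε y := by
  set F : Euc n → ℝ :=
    (ball x ε)ᶜ.indicator (fun y => (v x - v y) / ‖x - y‖ ^ ((n : ℝ) + 2 * s)) with hF
  have hFi : Integrable F :=
    (integrable_indicator_iff measurableSet_ball.compl).2 (integrableOn_trunc hs hε hv (v x) x)
  have hFi' : Integrable (fun y => F (reflFirst n y)) :=
    (refl_measurePreserving.integrable_comp_emb refl_measurableEmbedding).2 hFi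
  have hx0 : 0 < x 0 := hε.trans_le hx
  have hpt : ∀ y ∈ halfSpace n, F y + F (reflFirst n y) = foldIntegrand s v x ε y := by
    intro y hy
    have hmem : reflFirst n y ∈ (ball x ε)ᶜ := by
      have := coord_lt_refl hx0 hy
      rw [Set.mem_compl_iff, mem_ball, dist_comm, dist_eq_norm, norm_sub_refl]
      linarith
    rw [foldIntegrand, ← hF]
    congr 1
    rw [hF, Set.indicator_of_mem hmem, ha y, norm_sub_refl, sub_neg_eq_add]
  refine ⟨((hFi.add hFi').integrableOn (s := halfSpace n)).congr_fun hpt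
    measurableSet_halfSpace, ?_⟩
  rw [truncInt, ← integral_indicator measurableSet_ball.compl, integral_fold hFi]
  exact setIntegral_congr_fun measurableSet_halfSpace hpt

lemma trunc_le {s ε : ℝ} (hs : 0 < s) (hε : 0 < ε) {v : Euc n → ℝ} (hv : MemL n s v)
    (ha : AntiSymmFn n v) {x : Euc n} (hx : ε ≤ x 0) {B : Euc n → ℝ}
    (hB : IntegrableOn B (halfSpace n)) (hle : ∀ y ∈ halfSpace n, foldIntegrand s v x ε y ≤ B y) :
    truncInt n s v x ε ≤ ∫ y in halfSpace n, B y := by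
  obtain ⟨h1, h2⟩ := trunc_fold hs hε hv ha hx
  rw [h2]
  exact setIntegral_mono_on h1 hB measurableSet_halfSpace hle

lemma trunc_ge {s ε : ℝ} (hs : 0 < s) (hε : 0 < ε) {v : Euc n → ℝ} (hv : MemL n s v)
    (ha : AntiSymmFn n v) {x : Euc n} (hx : ε ≤ x 0) {B : Euc n → ℝ}
    (hB : IntegrableOn B (halfSpace n)) (hle : ∀ y ∈ halfSpace n, B y ≤ foldIntegrand s v x ε y) :
    ∫ y in halfSpace n, B y ≤ truncInt n s v x ε := by
  obtain ⟨h1, h2⟩ := trunc_fold hs hε hv ha hx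
  rw [h2]
  exact setIntegral_mono_on hB h1 measurableSet_halfSpace hle

/-- The sum of `f` over the four points `x ± h`, `x ± h_*`. -/
def fourSum (f : Euc n → ℝ) (x h : Euc n) : ℝ :=
  f (x + h) + f (x - h) + f (x + reflFirst n h) + f (x - reflFirst n h)

/-- The truncated integral may be symmetrised under `h ↦ -h` and `h ↦ h_*`. -/
lemma trunc_symm {s ε : ℝ} (hs : 0 < s) (hε : 0 < ε) {v : Euc n → ℝ} (hv : MemL n s v)
    (x : Euc n) :
    Integrable ((ball (0 : Euc n) ε)ᶜ.indicator
      (fun h => (4 * v x - fourSum v x h) / 4 / ‖h‖ ^ ((n : ℝ) + 2 * s))) ∧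
    truncInt n s v x ε = ∫ h, (ball (0 : Euc n) ε)ᶜ.indicator
      (fun h => (4 * v x - fourSum v x h) / 4 / ‖h‖ ^ ((n : ℝ) + 2 * s)) h := by
  set F : Euc n → ℝ :=
    (ball x ε)ᶜ.indicator (fun y => (v x - v y) / ‖x - y‖ ^ ((n : ℝ) + 2 * s)) with hF
  have hFi : Integrable F :=
    (integrable_indicator_iff measurableSet_ball.compl).2 (integrableOn_trunc hs hε hv (v x) x)
  set H : Euc n → ℝ := fun h => F (x + h) with hH
  have hHi : Integrable H := hFi.comp_add_left x
  have hH1 : ∫ h, H h = truncInt n s v x ε := by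
    rw [truncInt, ← integral_indicator measurableSet_ball.compl, ← hF]
    exact integral_add_left_eq_self F x
  have hneg : ∫ h, H (-h) = ∫ h, H h := integral_neg_eq_self H volume
  have hnegi : Integrable (fun h => H (-h)) := hHi.comp_neg
  have hrefl : ∀ g : Euc n → ℝ, ∫ h, g (reflFirst n h) = ∫ h, g h := fun g =>
    refl_measurePreserving.integral_comp refl_measurableEmbedding g
  have hrefli : ∀ g : Euc n → ℝ, Integrable g → Integrable (fun h => g (reflFirst n h)) :=
    fun g hg => (refl_measurePreserving.integrable_comp_emb refl_measurableEmbedding).2 hg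
  have hpt : ∀ h, (H h + H (-h) + H (reflFirst n h) + H (-reflFirst n h)) / 4 =
      (ball (0 : Euc n) ε)ᶜ.indicator
      (fun h => (4 * v x - fourSum v x h) / 4 / ‖h‖ ^ ((n : ℝ) + 2 * s)) h := by
    intro h
    have hHv : ∀ k : Euc n, ‖k‖ = ‖h‖ → H k = (ball (0 : Euc n) ε)ᶜ.indicator
        (fun h => (v x - v (x + k)) / ‖h‖ ^ ((n : ℝ) + 2 * s)) h := by
      intro k hk
      simp only [hH, hF, Set.indicator, Set.mem_compl_iff, mem_ball, dist_eq_norm, sub_zero,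
        add_sub_cancel_left, sub_add_cancel_left, norm_neg, hk]
    rw [hHv h rfl, hHv (-h) (norm_neg _), hHv _ (refl_norm h),
      hHv (-reflFirst n h) (by rw [norm_neg, refl_norm])]
    by_cases hm : h ∈ (ball (0 : Euc n) ε)ᶜ
    · simp only [Set.indicator_of_mem hm, fourSum, ← sub_eq_add_neg]
      ring
    · simp only [Set.indicator_of_notMem hm]; norm_num
  have hi1 := hrefli _ hHi
  have hi2 := hrefli _ hnegi
  have hsum : Integrable fun h => (H h + H (-h) + H (reflFirst n h) + H (-reflFirst n h)) / 4 :=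
    (((hHi.add hnegi).add hi1).add hi2).div_const 4
  have hA : Integrable fun h => H h + H (-h) := hHi.add hnegi
  have hA' : Integrable fun h => H h + H (-h) + H (reflFirst n h) := hA.add hi1
  have e : (fun h => (H h + H (-h) + H (reflFirst n h) + H (-reflFirst n h)) / 4) =
    (ball (0 : Euc n) ε)ᶜ.indicator
      (fun h => (4 * v x - fourSum v x h) / 4 / ‖h‖ ^ ((n : ℝ) + 2 * s)) := funext hpt
  rw [← e]
  refine ⟨hsum, ?_⟩
  rw [integral_div, integral_add hA' hi2, integral_add hA hi1,
    integral_add hHi hnegi, hrefl H, hrefl (fun h => H (-h)), hneg, hH1]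
  ring

lemma trunc_symm_le {s ε : ℝ} (hs : 0 < s) (hε : 0 < ε) {v : Euc n → ℝ} (hv : MemL n s v)
    (x : Euc n) {B : Euc n → ℝ} (hB : Integrable B) (hB0 : ∀ h, 0 ≤ B h)
    (hle : ∀ h, (4 * v x - fourSum v x h) / 4 / ‖h‖ ^ ((n : ℝ) + 2 * s) ≤ B h) :
    truncInt n s v x ε ≤ ∫ h, B h := by
  obtain ⟨h1, h2⟩ := trunc_symm hs hε hv x
  rw [h2]
  refine integral_mono h1 hB fun h => ?_
  by_cases hm : h ∈ (ball (0 : Euc n) ε)ᶜ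
  · rw [Set.indicator_of_mem hm]; exact hle h
  · rw [Set.indicator_of_notMem hm]; exact hB0 h

lemma trunc_symm_ge {s ε : ℝ} (hs : 0 < s) (hε : 0 < ε) {v : Euc n → ℝ} (hv : MemL n s v)
    (x : Euc n) {B : Euc n → ℝ} (hB : Integrable B) (hB0 : ∀ h, ‖h‖ < ε → B h ≤ 0)
    (hle : ∀ h, B h ≤ (4 * v x - fourSum v x h) / 4 / ‖h‖ ^ ((n : ℝ) + 2 * s)) :
    ∫ h, B h ≤ truncInt n s v x ε := by
  obtain ⟨h1, h2⟩ := trunc_symm hs hε hv x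
  rw [h2]
  refine integral_mono hB h1 fun h => ?_
  by_cases hm : h ∈ (ball (0 : Euc n) ε)ᶜ
  · rw [Set.indicator_of_mem hm]; exact hle h
  · rw [Set.indicator_of_notMem hm]; exact hB0 h (by simpa using hm)

end fold

section radial
variable {n : ℕ} [NeZero n]

lemma integrableOn_near {s : ℝ} (hs1 : s < 1) (r : ℝ) :
    IntegrableOn (fun h : Euc n => ‖h‖ ^ 2 / ‖h‖ ^ ((n : ℝ) + 2 * s)) (ball 0 r) := by
  have hn : 1 ≤ n := NeZero.one_le
  refine integrableOn_ball_of_norm_le_rpow (C := 1) (α := n + 2 * s - 2) (by simpa using hn)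
    (by simp; linarith) ?_ (Measurable.aestronglyMeasurable (by fun_prop))
  have hne : ∀ᵐ y : Euc n, y 0 ≠ 0 := by
    rw [ae_iff]; simpa using hyperplane_null (n := n)
  refine ae_restrict_of_ae ?_
  filter_upwards [hne] with y hy
  have hy0 : 0 < ‖y‖ := norm_pos_iff.2 (by rintro rfl; simp at hy)
  rw [Real.norm_of_nonneg (by positivity), one_mul, neg_sub, Real.rpow_sub hy0, Real.rpow_two]

lemma integrableOn_far {s r : ℝ} (hs : 0 < s) (hr : 0 < r) :
    IntegrableOn (fun h : Euc n => 1 / ‖h‖ ^ ((n : ℝ) + 2 * s)) (ball 0 r)ᶜ := by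
  have h0 : MemL n s (fun _ => 0) := by
    refine ⟨locallyIntegrable_const 0, ?_⟩
    simp
  have := integrableOn_trunc (n := n) hs hr h0 1 0
  simpa using this

/-- `∫_{B₁} |h|^(2-n-2s) dh`. -/
def nearConst (n : ℕ) (s : ℝ) : ℝ :=
  ∫ h in ball (0 : Euc n) 1, ‖h‖ ^ 2 / ‖h‖ ^ ((n : ℝ) + 2 * s)

/-- `∫_{|h| ≥ 1} |h|^(-n-2s) dh`. -/
def farConst (n : ℕ) (s : ℝ) : ℝ :=
  ∫ h in (ball (0 : Euc n) 1)ᶜ, 1 / ‖h‖ ^ ((n : ℝ) + 2 * s)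

lemma nearConst_nonneg (n : ℕ) (s : ℝ) : 0 ≤ nearConst n s :=
  setIntegral_nonneg measurableSet_ball fun _ _ => by positivity

lemma farConst_pos {s : ℝ} (hs : 0 < s) : 0 < farConst n s := by
  rw [farConst, setIntegral_pos_iff_support_of_nonneg_ae
    (Eventually.of_forall fun _ => by positivity) (integrableOn_far hs one_pos)]
  have hsub : (closedBall (0 : Euc n) 1)ᶜ ⊆
      (Function.support fun h : Euc n => 1 / ‖h‖ ^ ((n : ℝ) + 2 * s)) ∩ (ball 0 1)ᶜ := by
    intro h hh
    have h1 : 1 < ‖h‖ := by simpa using hh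
    refine ⟨?_, by simpa using h1.le⟩
    rw [Function.mem_support]
    have : 0 < ‖h‖ := by linarith
    positivity
  refine lt_of_lt_of_le ?_ (measure_mono hsub)
  refine isClosed_closedBall.isOpen_compl.measure_pos _ ⟨(2:ℝ) • EuclideanSpace.single 0 1, ?_⟩
  simp [norm_smul]

lemma near_scale {s r : ℝ} (hr : 0 < r) :
    ∫ h in ball (0 : Euc n) r, ‖h‖ ^ 2 / ‖h‖ ^ ((n : ℝ) + 2 * s) =
      r ^ 2 * r ^ (-(2 * s)) * nearConst n s := by
  have h := Measure.setIntegral_comp_smul_of_pos (volume : Measure (Euc n))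
    (fun h : Euc n => ‖h‖ ^ 2 / ‖h‖ ^ ((n : ℝ) + 2 * s)) (ball 0 1) hr
  rw [smul_unitBall_of_pos hr] at h
  have e : ∀ x : Euc n, ‖r • x‖ ^ 2 / ‖r • x‖ ^ ((n : ℝ) + 2 * s) =
      r ^ 2 / r ^ ((n : ℝ) + 2 * s) * (‖x‖ ^ 2 / ‖x‖ ^ ((n : ℝ) + 2 * s)) := by
    intro x
    rw [norm_smul, Real.norm_of_nonneg hr.le, mul_pow, Real.mul_rpow hr.le (norm_nonneg x)]
    ring
  simp only [e] at h
  rw [integral_const_mul, ← nearConst, finrank_euclideanSpace_fin, smul_eq_mul,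
    Real.rpow_add hr, Real.rpow_natCast] at h
  rw [Real.rpow_neg hr.le]
  have hp : 0 < r ^ n := by positivity
  have hq : 0 < r ^ (2 * s) := by positivity
  field_simp at h ⊢
  linarith

open scoped Pointwise in
lemma far_scale {s r : ℝ} (hr : 0 < r) :
    ∫ h in (ball (0 : Euc n) r)ᶜ, 1 / ‖h‖ ^ ((n : ℝ) + 2 * s) =
      r ^ (-(2 * s)) * farConst n s := by
  have h := Measure.setIntegral_comp_smul_of_pos (volume : Measure (Euc n))
    (fun h : Euc n => 1 / ‖h‖ ^ ((n : ℝ) + 2 * s)) (ball 0 1)ᶜ hr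
  have hset : r • (ball (0 : Euc n) 1)ᶜ = (ball (0 : Euc n) r)ᶜ := by
    ext y
    rw [← smul_unitBall_of_pos hr]
    simp only [Set.mem_smul_set_iff_inv_smul_mem₀ hr.ne', Set.mem_compl_iff]
  rw [hset] at h
  have e : ∀ x : Euc n, 1 / ‖r • x‖ ^ ((n : ℝ) + 2 * s) =
      1 / r ^ ((n : ℝ) + 2 * s) * (1 / ‖x‖ ^ ((n : ℝ) + 2 * s)) := by
    intro x
    rw [norm_smul, Real.norm_of_nonneg hr.le, Real.mul_rpow hr.le (norm_nonneg x)]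
    ring
  simp only [e] at h
  rw [integral_const_mul, ← farConst, finrank_euclideanSpace_fin, smul_eq_mul,
    Real.rpow_add hr, Real.rpow_natCast] at h
  rw [Real.rpow_neg hr.le]
  have hp : 0 < r ^ n := by positivity
  have hq : 0 < r ^ (2 * s) := by positivity
  field_simp at h ⊢
  linarith

/-- The radial comparison function equal to `A |h|^(2-n-2s)` on `B_r` and to `B |h|^(-n-2s)`
outside. -/
def radialBound (n : ℕ) (s r A B : ℝ) (h : Euc n) : ℝ :=
  A * (ball (0 : Euc n) r).indicator (fun h => ‖h‖ ^ 2 / ‖h‖ ^ ((n : ℝ) + 2 * s)) h +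
    B * (ball (0 : Euc n) r)ᶜ.indicator (fun h => 1 / ‖h‖ ^ ((n : ℝ) + 2 * s)) h

lemma radialBound_near {s r A B : ℝ} {h : Euc n} (hh : ‖h‖ < r) :
    radialBound n s r A B h = A * ‖h‖ ^ 2 / ‖h‖ ^ ((n : ℝ) + 2 * s) := by
  have hm : h ∈ ball (0 : Euc n) r := by simpa using hh
  have hm' : h ∉ (ball (0 : Euc n) r)ᶜ := by simpa using hh
  rw [radialBound, Set.indicator_of_mem hm, Set.indicator_of_notMem hm']
  ring

lemma radialBound_far {s r A B : ℝ} {h : Euc n} (hh : r ≤ ‖h‖) :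
    radialBound n s r A B h = B / ‖h‖ ^ ((n : ℝ) + 2 * s) := by
  have hm : h ∉ ball (0 : Euc n) r := by simpa using hh
  have hm' : h ∈ (ball (0 : Euc n) r)ᶜ := by simpa using hh
  rw [radialBound, Set.indicator_of_notMem hm, Set.indicator_of_mem hm']
  ring

lemma radialBound_integral {s r : ℝ} (hs : 0 < s) (hs1 : s < 1) (hr : 0 < r) (A B : ℝ) :
    Integrable (radialBound n s r A B) ∧ ∫ h, radialBound n s r A B h =
      r ^ (-(2 * s)) * (A * r ^ 2 * nearConst n s + B * farConst n s) := by
  have h1 := (integrable_indicator_iff measurableSet_ball).2 (integrableOn_near (n := n) hs1 r)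
  have h2 := (integrable_indicator_iff measurableSet_ball.compl).2 (integrableOn_far (n := n) hs hr)
  refine ⟨(h1.const_mul A).add (h2.const_mul B), ?_⟩
  unfold radialBound
  rw [integral_add (h1.const_mul A) (h2.const_mul B), integral_const_mul, integral_const_mul,
    integral_indicator measurableSet_ball, integral_indicator measurableSet_ball.compl,
    near_scale hr, far_scale hr]
  ring

end radial

/-! ### Barriers -/

section linear
variable {n : ℕ} [NeZero n]

lemma memL_of_bounded {s : ℝ} (hs : 0 < s) {f : Euc n → ℝ} (hf : Measurable f) {M : ℝ}
    (hM : ∀ x, |f x| ≤ M) : MemL n s f := by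
  have hM0 : 0 ≤ M := (abs_nonneg _).trans (hM 0)
  constructor
  · refine (locallyIntegrable_const M).mono hf.aestronglyMeasurable (Eventually.of_forall fun x => ?_)
    rw [Real.norm_eq_abs, Real.norm_of_nonneg hM0]; exact hM x
  · refine ((integrable_weight (n := n) (N := n + 2 * s) (by linarith)).const_mul M).mono'
      (Measurable.aestronglyMeasurable (by fun_prop)) (Eventually.of_forall fun x => ?_)
    rw [Real.norm_of_nonneg (by positivity), mul_one_div]
    gcongr
    exact hM x

lemma MemL.sub_mul {s : ℝ} {u f : Euc n → ℝ} (hu : MemL n s u) (hf : MemL n s f) (t : ℝ) :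
    MemL n s (fun x => u x - t * f x) := by
  constructor
  · exact hu.1.sub (hf.1.smul t)
  · refine (hu.2.add (hf.2.const_mul |t|)).mono' ?_ (Eventually.of_forall fun x => ?_)
    · refine AEStronglyMeasurable.div₀ ?_ (Measurable.aestronglyMeasurable (by fun_prop))
      exact (hu.1.aestronglyMeasurable.sub (hf.1.aestronglyMeasurable.const_mul t)).norm
    · rw [Real.norm_of_nonneg (by positivity), Pi.add_apply, mul_div_assoc', ← add_div, ← abs_mul]
      gcongr
      exact abs_sub _ _

lemma truncInt_split {s ε : ℝ} (hs : 0 < s) (hε : 0 < ε) {u f : Euc n → ℝ} (hu : MemL n s u)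
    (hf : MemL n s f) (t : ℝ) (x : Euc n) :
    truncInt n s u x ε = truncInt n s (fun y => u y - t * f y) x ε + t * truncInt n s f x ε := by
  have h1 := integrableOn_trunc hs hε (hu.sub_mul hf t) (u x - t * f x) x
  have h2 := integrableOn_trunc hs hε hf (f x) x
  unfold truncInt
  rw [← integral_const_mul, ← integral_add h1 (h2.const_mul t)]
  congr 1
  ext y
  ring

end linear

section geometry4
variable {n : ℕ} [NeZero n]

lemma inner_refl (x h : Euc n) :
    inner ℝ x (reflFirst n h) = inner ℝ x h - 2 * x 0 * h 0 := by
  rw [reflFirst, inner_sub_right, inner_smul_right, EuclideanSpace.inner_single_right]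
  simp; ring

/-- Coordinates adapted to the four points `x ± h`, `x ± h_*`: with `a = x₁`, `k = h₁`,
`β = x'·h'` and `q = |h|²` their first coordinates are `a ± k` and their squared norms are
`|x|² + q ± 2ak ± 2β`. -/
lemma four_points (x h : Euc n) : ∃ β : ℝ, |β| ≤ 2 * ‖x‖ * ‖h‖ ∧
    ‖x + h‖ ^ 2 = ‖x‖ ^ 2 + ‖h‖ ^ 2 + 2 * β + 2 * x 0 * h 0 ∧
    ‖x - h‖ ^ 2 = ‖x‖ ^ 2 + ‖h‖ ^ 2 - 2 * β - 2 * x 0 * h 0 ∧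
    ‖x + reflFirst n h‖ ^ 2 = ‖x‖ ^ 2 + ‖h‖ ^ 2 + 2 * β - 2 * x 0 * h 0 ∧
    ‖x - reflFirst n h‖ ^ 2 = ‖x‖ ^ 2 + ‖h‖ ^ 2 - 2 * β + 2 * x 0 * h 0 := by
  refine ⟨inner ℝ x h - x 0 * h 0, ?_, ?_, ?_, ?_, ?_⟩
  · have h1 := abs_real_inner_le_norm x h
    have h2 : |x 0 * h 0| ≤ ‖x‖ * ‖h‖ := by
      rw [abs_mul]
      exact mul_le_mul (coord_le_norm x) (coord_le_norm h) (abs_nonneg _) (norm_nonneg _)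
    have := abs_sub (inner ℝ x h) (x 0 * h 0)
    linarith
  · rw [norm_add_sq_real]; ring
  · rw [norm_sub_sq_real]; ring
  · rw [norm_add_sq_real, inner_refl, refl_norm]; ring
  · rw [norm_sub_sq_real, inner_refl, refl_norm]; ring

end geometry4

section lowerBarrier
variable {n : ℕ} [NeZero n]

/-- The profile `(9/16 - t)₊`; it is convex and `1`-Lipschitz. -/
def hat (t : ℝ) : ℝ := max (9 / 16 - t) 0

lemma hat_nonneg (t : ℝ) : 0 ≤ hat t := le_max_right _ _

lemma hat_lip (t r : ℝ) : hat t - hat r ≤ |t - r| := by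
  unfold hat
  rcases le_total (9 / 16 - t) 0 with h1 | h1 <;> rcases le_total (9 / 16 - r) 0 with h2 | h2 <;>
    simp only [max_eq_left, max_eq_right, h1, h2] <;>
    linarith [neg_abs_le (t - r), le_abs_self (t - r)]

lemma hat_convex (t r : ℝ) : 2 * hat t ≤ hat (t + r) + hat (t - r) := by
  have h1 := le_max_left (9 / 16 - (t + r)) 0
  have h2 := le_max_left (9 / 16 - (t - r)) 0
  have h3 := hat_nonneg (t + r)
  have h4 := hat_nonneg (t - r)
  unfold hat at *
  rcases le_total (9 / 16 - t) 0 with h | h <;> simp only [max_eq_left, max_eq_right, h] <;>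
    linarith

/-- Lower barrier `x₁ (9/16 - |x|²)₊`. -/
def phi (x : Euc n) : ℝ := x 0 * hat (‖x‖ ^ 2)

lemma hat_pair {a : ℝ} (ha : 0 ≤ a) (k t : ℝ) :
    2 * a * hat t - 4 * a * k ^ 2 ≤
      (a + k) * hat (t + 2 * a * k) + (a - k) * hat (t - 2 * a * k) := by
  have h1 := mul_le_mul_of_nonneg_left (hat_convex t (2 * a * k)) ha
  have h2 := hat_lip (t + 2 * a * k) (t - 2 * a * k)
  have h3 := hat_lip (t - 2 * a * k) (t + 2 * a * k)
  have e1 : t + 2 * a * k - (t - 2 * a * k) = 4 * a * k := by ring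
  have e2 : t - 2 * a * k - (t + 2 * a * k) = -(4 * a * k) := by ring
  have e3 : |4 * a * k| = 4 * a * |k| := by
    rw [abs_mul, abs_of_nonneg (by positivity)]
  rw [e1, e3] at h2
  rw [e2, abs_neg, e3] at h3
  rcases le_total 0 k with hk | hk
  · rw [abs_of_nonneg hk] at h2 h3; nlinarith
  · rw [abs_of_nonpos hk] at h2 h3; nlinarith

lemma fourSum_phi_near {x : Euc n} (hx : 0 < x 0) (h : Euc n) :
    (4 * phi x - fourSum phi x h) / 4 ≤ 3 * x 0 * ‖h‖ ^ 2 := by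
  obtain ⟨β, -, e1, e2, e3, e4⟩ := four_points x h
  simp only [fourSum, phi, e1, e2, e3, e4]
  simp only [PiLp.add_apply, PiLp.sub_apply, refl_zero]
  set q := ‖h‖ ^ 2
  set X := ‖x‖ ^ 2
  set a := x 0
  set k := h 0
  have hk : k ^ 2 ≤ q := by
    have := coord_le_norm h
    exact sq_le_sq' (by linarith [neg_abs_le (h 0)]) ((le_abs_self _).trans this)
  have p1 := hat_pair hx.le k (X + q + 2 * β)
  have p2 := hat_pair hx.le k (X + q - 2 * β)
  have p3 := mul_le_mul_of_nonneg_left (hat_convex (X + q) (2 * β)) hx.le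
  have p4 : hat X - q ≤ hat (X + q) := by
    have := hat_lip X (X + q)
    have hq : 0 ≤ q := by positivity
    rw [sub_add_cancel_left, abs_neg, abs_of_nonneg hq] at this
    linarith
  have p5 := mul_le_mul_of_nonneg_left p4 hx.le
  have p6 := mul_le_mul_of_nonneg_left hk hx.le
  simp only [sub_neg_eq_add, ← sub_eq_add_neg] at *
  nlinarith

lemma hat_eq_zero {y : Euc n} (hy : 3 / 4 ≤ ‖y‖) : hat (‖y‖ ^ 2) = 0 := by
  unfold hat
  rw [max_eq_right]
  nlinarith

lemma hat_le (t : ℝ) (ht : 0 ≤ t) : hat t ≤ 9 / 16 := by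
  unfold hat; exact max_le (by linarith) (by norm_num)

lemma fourSum_phi_far {x : Euc n} (hx : 0 < x 0) (hx1 : ‖x‖ < 3 / 4) {h : Euc n} (hh : 2 ≤ ‖h‖) :
    (4 * phi x - fourSum phi x h) / 4 ≤ x 0 := by
  have z : ∀ k : Euc n, ‖k‖ = ‖h‖ → phi (x + k) = 0 := by
    intro k hk
    have : ‖k‖ ≤ ‖x + k‖ + ‖x‖ := by
      have e : k = (x + k) - x := by abel
      calc ‖k‖ = ‖(x + k) - x‖ := by rw [← e]
        _ ≤ _ := norm_sub_le _ _
    rw [phi, hat_eq_zero (by linarith), mul_zero]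
  simp only [fourSum, sub_eq_add_neg x]
  rw [z h rfl, z (-h) (norm_neg h), z _ (refl_norm h), z _ (by rw [norm_neg, refl_norm])]
  have := hat_le (‖x‖ ^ 2) (by positivity)
  have h0 := hat_nonneg (‖x‖ ^ 2)
  unfold phi
  nlinarith

lemma phi_continuous : Continuous (phi : Euc n → ℝ) := by
  unfold phi hat
  fun_prop

lemma phi_antisymm : AntiSymmFn n phi := by
  intro x
  rw [phi, phi, refl_zero, refl_norm]; ring

lemma phi_bound (x : Euc n) : |phi x| ≤ 1 := by
  rw [phi, abs_mul, abs_of_nonneg (hat_nonneg _)]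
  rcases le_total (3 / 4) ‖x‖ with h | h
  · rw [hat_eq_zero h]; simp
  · have := hat_le (‖x‖ ^ 2) (by positivity)
    have h2 := coord_le_norm x
    have h3 := hat_nonneg (‖x‖ ^ 2)
    nlinarith [abs_nonneg (x 0)]

lemma phi_memL {s : ℝ} (hs : 0 < s) : MemL n s (phi : Euc n → ℝ) :=
  memL_of_bounded hs phi_continuous.measurable phi_bound

/-- `(-Δ)ˢ φ ≤ C x₁` on the support of the lower barrier, uniformly for the truncations. -/
lemma trunc_phi_le {s : ℝ} (hs : 0 < s) (hs1 : s < 1) : ∃ C : ℝ, 0 ≤ C ∧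
    ∀ (x : Euc n), 0 < x 0 → ‖x‖ < 3 / 4 → ∀ ε > 0, truncInt n s phi x ε ≤ C * x 0 := by
  refine ⟨2 ^ (-(2 * s)) * (3 * 2 ^ 2 * nearConst n s + farConst n s), ?_, ?_⟩
  · have := nearConst_nonneg n s
    have := (farConst_pos (n := n) hs).le
    positivity
  intro x hx hx1 ε hε
  obtain ⟨hi, he⟩ := radialBound_integral (n := n) hs hs1 two_pos (3 * x 0) (x 0)
  have hN : ∀ h : Euc n, 0 ≤ ‖h‖ ^ ((n : ℝ) + 2 * s) := fun h => by positivity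
  refine (trunc_symm_le hs hε (phi_memL hs) x hi ?_ ?_).trans ?_
  · intro h
    rcases lt_or_ge ‖h‖ 2 with hh | hh
    · rw [radialBound_near hh]; positivity
    · rw [radialBound_far hh]; positivity
  · intro h
    rcases lt_or_ge ‖h‖ 2 with hh | hh
    · rw [radialBound_near hh]
      exact div_le_div_of_nonneg_right (fourSum_phi_near hx h) (hN h)
    · rw [radialBound_far hh]
      exact div_le_div_of_nonneg_right (fourSum_phi_far hx hx1 hh) (hN h)
  · rw [he]; apply le_of_eq; ring

end lowerBarrier

section upperBarrier
variable {n : ℕ} [NeZero n]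

/-- Second order expansion of `(1 - z)^(-p)` from above. -/
lemma inv_pow_le (p : ℕ) : ∃ C : ℝ, 0 ≤ C ∧ ∀ z : ℝ, |z| ≤ 1 / 2 →
    1 / (1 - z) ^ p ≤ 1 + p * z + C * z ^ 2 := by
  induction p with
  | zero => exact ⟨0, le_rfl, fun z _ => by simp⟩
  | succ p ih =>
    obtain ⟨C, hC, h⟩ := ih
    refine ⟨2 + p + p + C + C + C, by positivity, fun z hz => ?_⟩
    have hz1 := (abs_le.1 hz).1
    have hz2 := (abs_le.1 hz).2
    have h0 : 0 < 1 - z := by linarith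
    have h1 : 1 / (1 - z) ≤ 1 + z + 2 * z ^ 2 := by
      rw [div_le_iff₀ h0]; nlinarith [sq_nonneg z]
    have h2 := h z hz
    have h3 : 0 < 1 / (1 - z) ^ p := by positivity
    have h4 : 0 < 1 / (1 - z) := by positivity
    have e : 1 / (1 - z) ^ (p + 1) = 1 / (1 - z) ^ p * (1 / (1 - z)) := by
      rw [pow_succ]; field_simp
    rw [e]
    refine (mul_le_mul h2 h1 h4.le (h3.le.trans h2)).trans ?_
    push_cast
    have hp : (0:ℝ) ≤ p := Nat.cast_nonneg p
    -- the coefficients of `z²` are `2 + p + 2pz + C(1 + z + 2z²)`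
    have hz3 : z ^ 2 ≤ 1 / 4 := by nlinarith
    have k1 : 2 * p * z ≤ p := by nlinarith
    have k2 : C * (z + 2 * z ^ 2) ≤ C * 2 := by
      apply mul_le_mul_of_nonneg_left _ hC; linarith
    have k3 : (2 * p * z + C * (z + 2 * z ^ 2)) * z ^ 2 ≤ (p + C * 2) * z ^ 2 :=
      mul_le_mul_of_nonneg_right (by linarith) (sq_nonneg z)
    linarith

/-- The antisymmetric polynomial `y₁ (1 + p z + C z²)`, `z = (|y|² - |x|²)/D`. -/
def polyQ (x : Euc n) (D p C : ℝ) (y : Euc n) : ℝ :=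
  y 0 * (1 + p * ((‖y‖ ^ 2 - ‖x‖ ^ 2) / D) + C * ((‖y‖ ^ 2 - ‖x‖ ^ 2) / D) ^ 2)

/-- The symmetric set `B_r(x) ∪ B_r(x_*)`. -/
def cutSet (x : Euc n) (r : ℝ) : Set (Euc n) :=
  {y : Euc n | ‖y - x‖ < r ∨ ‖reflFirst n y - x‖ < r}

lemma mem_cutSet {x : Euc n} {r : ℝ} {y : Euc n} :
    y ∈ cutSet x r ↔ ‖y - x‖ < r ∨ ‖reflFirst n y - x‖ < r := Iff.rfl

/-- `polyQ` cut off to `B_r(x) ∪ B_r(x_*)`. -/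
def cutQ (x : Euc n) (D p C r : ℝ) : Euc n → ℝ :=
  (cutSet x r).indicator (polyQ x D p C)

lemma polyQ_self (x : Euc n) (D p C : ℝ) : polyQ x D p C x = x 0 := by
  simp [polyQ]

lemma polyQ_refl (x : Euc n) (D p C : ℝ) (y : Euc n) :
    polyQ x D p C (reflFirst n y) = - polyQ x D p C y := by
  rw [polyQ, polyQ, refl_zero, refl_norm]; ring

lemma cutQ_of_mem {x : Euc n} {D p C r : ℝ} {y : Euc n} (hy : ‖y - x‖ < r) :
    cutQ x D p C r y = polyQ x D p C y :=
  Set.indicator_of_mem (mem_cutSet.2 (Or.inl hy)) _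

lemma cutQ_of_far {x : Euc n} (hx : 0 < x 0) {D p C r : ℝ} {y : Euc n} (hy0 : 0 < y 0)
    (hy : r ≤ ‖y - x‖) : cutQ x D p C r y = 0 := by
  refine Set.indicator_of_notMem ?_ _
  rintro (h | h)
  · linarith
  · have h1 := norm_sub_le_refl hx hy0.le
    rw [← norm_sub_refl, norm_sub_rev, norm_sub_rev x (reflFirst n y)] at h1
    linarith

lemma cutQ_antisymm (x : Euc n) (D p C r : ℝ) : AntiSymmFn n (cutQ x D p C r) := by
  intro y
  have hiff : reflFirst n y ∈ cutSet x r ↔ y ∈ cutSet x r := by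
    rw [mem_cutSet, mem_cutSet, refl_refl, or_comm]
  unfold cutQ
  by_cases h : y ∈ cutSet x r
  · rw [Set.indicator_of_mem (hiff.2 h), Set.indicator_of_mem h, polyQ_refl]
  · rw [Set.indicator_of_notMem (mt hiff.1 h), Set.indicator_of_notMem h, neg_zero]

lemma polyQ_continuous (x : Euc n) (D p C : ℝ) : Continuous (polyQ x D p C) := by
  unfold polyQ
  fun_prop

lemma refl_continuous : Continuous (reflFirst n) := by
  have h : (⇑(reflIso n)) = reflFirst n := funext (reflIso_apply n)
  rw [← h]; exact (reflIso n).continuous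

lemma cutQ_memL {s : ℝ} (hs : 0 < s) (x : Euc n) (D p C r : ℝ) :
    MemL n s (cutQ x D p C r) := by
  have hr := refl_continuous (n := n)
  have hm1 : IsOpen {y : Euc n | ‖y - x‖ < r} := isOpen_lt (by fun_prop) continuous_const
  have hm2 : IsOpen {y : Euc n | ‖reflFirst n y - x‖ < r} :=
    isOpen_lt (by fun_prop) continuous_const
  have hmeas : MeasurableSet (cutSet x r) := (hm1.union hm2).measurableSet
  obtain ⟨M, hM⟩ := (isCompact_closedBall (0 : Euc n) (‖x‖ + r)).exists_bound_of_continuousOn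
    (polyQ_continuous x D p C).continuousOn
  refine memL_of_bounded hs (M := max M 0) ((polyQ_continuous x D p C).measurable.indicator hmeas)
    fun y => ?_
  by_cases h : y ∈ cutSet x r
  · rw [cutQ, Set.indicator_of_mem h, ← Real.norm_eq_abs]
    refine (hM y ?_).trans (le_max_left _ _)
    rw [mem_closedBall, dist_zero_right]
    have tri : ∀ z : Euc n, ‖z‖ ≤ ‖z - x‖ + ‖x‖ := fun z => by
      simpa using norm_add_le (z - x) x
    rcases h with h | h
    · linarith [tri y]
    · have := tri (reflFirst n y)
      rw [refl_norm] at this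
      linarith
  · rw [cutQ, Set.indicator_of_notMem h]; simp

lemma polyQ_key (a k X q β p C : ℝ) {D : ℝ} (hD : 0 < D) :
    (4 * a - ((a + k) * (1 + p * ((X + q + 2 * β + 2 * a * k - X) / D) +
        C * ((X + q + 2 * β + 2 * a * k - X) / D) ^ 2) +
      (a - k) * (1 + p * ((X + q - 2 * β - 2 * a * k - X) / D) +
        C * ((X + q - 2 * β - 2 * a * k - X) / D) ^ 2) +
      (a + -k) * (1 + p * ((X + q + 2 * β - 2 * a * k - X) / D) +
        C * ((X + q + 2 * β - 2 * a * k - X) / D) ^ 2) +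
      (a - -k) * (1 + p * ((X + q - 2 * β + 2 * a * k - X) / D) +
        C * ((X + q - 2 * β + 2 * a * k - X) / D) ^ 2))) / 4 =
      -(p * a * (q + 2 * k ^ 2) / D +
        C * a * (4 * a ^ 2 * k ^ 2 + 4 * β ^ 2 + q ^ 2 + 4 * k ^ 2 * q) / D ^ 2) := by
  field_simp
  ring

lemma polyQ_est {a k q β p C D : ℝ} (ha : 0 < a) (ha1 : a ≤ 1) (hD : 0 < D) (hD1 : D ≤ 1)
    (hp : 0 ≤ p) (hC : 0 ≤ C) (hq0 : 0 ≤ q) (hq1 : q ≤ 1) (hk : k ^ 2 ≤ q) (hβ2 : β ^ 2 ≤ 4 * q) :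
    p * a * (q + 2 * k ^ 2) / D +
        C * a * (4 * a ^ 2 * k ^ 2 + 4 * β ^ 2 + q ^ 2 + 4 * k ^ 2 * q) / D ^ 2 ≤
      (3 * p + 25 * C) * a / D ^ 2 * q := by
  have t1 : p * a * (q + 2 * k ^ 2) / D ≤ 3 * p * a * q / D ^ 2 := by
    rw [div_le_div_iff₀ hD (by positivity)]
    have : p * a * (q + 2 * k ^ 2) ≤ 3 * p * a * q := by
      have := mul_le_mul_of_nonneg_left hk (by positivity : 0 ≤ 2 * (p * a))
      linarith
    have h2 : D ^ 2 ≤ D := by nlinarith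
    exact mul_le_mul this h2 (by positivity) (by positivity)
  have t2 : C * a * (4 * a ^ 2 * k ^ 2 + 4 * β ^ 2 + q ^ 2 + 4 * k ^ 2 * q) / D ^ 2 ≤
      C * a * (25 * q) / D ^ 2 := by
    have a2 : a ^ 2 ≤ 1 := by nlinarith
    have b1 : a ^ 2 * k ^ 2 ≤ q := by nlinarith [sq_nonneg k]
    have b2 : q ^ 2 ≤ q := by nlinarith
    have b3 : k ^ 2 * q ≤ q := by nlinarith [sq_nonneg k]
    gcongr
    nlinarith
  calc _ ≤ 3 * p * a * q / D ^ 2 + C * a * (25 * q) / D ^ 2 := add_le_add t1 t2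
    _ = _ := by ring

lemma fourSum_polyQ {x : Euc n} (hx : 0 < x 0) (hx1 : ‖x‖ ≤ 1) {D p C : ℝ} (hD : 0 < D)
    (hD1 : D ≤ 1) (hp : 0 ≤ p) (hC : 0 ≤ C) {h : Euc n} (hh : ‖h‖ ≤ 1) :
    -((3 * p + 25 * C) * x 0 / D ^ 2) * ‖h‖ ^ 2 ≤
      (4 * x 0 - fourSum (polyQ x D p C) x h) / 4 := by
  obtain ⟨β, hβ, e1, e2, e3, e4⟩ := four_points x h
  simp only [fourSum, polyQ, e1, e2, e3, e4]
  simp only [PiLp.add_apply, PiLp.sub_apply, refl_zero]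
  have hk : (h 0) ^ 2 ≤ ‖h‖ ^ 2 := by
    have := coord_le_norm h
    exact sq_le_sq' (by linarith [neg_abs_le (h 0)]) ((le_abs_self _).trans this)
  have hβ2 : β ^ 2 ≤ 4 * ‖h‖ ^ 2 := by
    have h1 : |β| ≤ 2 * ‖h‖ := hβ.trans (by nlinarith [norm_nonneg h])
    have := sq_le_sq' (by linarith [neg_abs_le β]) ((le_abs_self _).trans h1)
    linarith
  have hq1 : ‖h‖ ^ 2 ≤ 1 := by nlinarith [norm_nonneg h]
  have ha1 : x 0 ≤ 1 := (le_abs_self _).trans ((coord_le_norm x).trans hx1)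
  have hq0 : 0 ≤ ‖h‖ ^ 2 := by positivity
  generalize ‖h‖ ^ 2 = q at *
  generalize ‖x‖ ^ 2 = X at *
  generalize x 0 = a at *
  generalize h 0 = k at *
  rw [polyQ_key a k X q β p C hD, neg_mul, neg_le_neg_iff]
  exact polyQ_est hx ha1 hD hD1 hp hC hq0 hq1 hk hβ2

/-- Lower bound for the truncated fractional Laplacian of the cut off polynomial at `x`. The factor
`1 + p z + C z²` is assumed nonnegative near `x`, so that the cut off function is nonpositive outside
`B_r(x)`. -/
lemma trunc_cutQ_ge {s : ℝ} (hs : 0 < s) (hs1 : s < 1) {x : Euc n} (hx : 0 < x 0) (hx1 : ‖x‖ ≤ 1)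
    {D p C r : ℝ} (hD : 0 < D) (hD1 : D ≤ 1) (hp : 0 ≤ p) (hC : 0 ≤ C) (hr : 0 < r) (hr1 : r ≤ 1)
    (hpos : ∀ y : Euc n, ‖y - x‖ < r → 0 ≤ 1 + p * ((‖y‖ ^ 2 - ‖x‖ ^ 2) / D) +
      C * ((‖y‖ ^ 2 - ‖x‖ ^ 2) / D) ^ 2) {ε : ℝ} (hε : 0 < ε) (hεr : ε ≤ r) :
    r ^ (-(2 * s)) * x 0 * (farConst n s - (3 * p + 25 * C) * (r / D) ^ 2 * nearConst n s) ≤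
      truncInt n s (cutQ x D p C r) x ε := by
  obtain ⟨hi, he⟩ := radialBound_integral (n := n) hs hs1 hr
    (-((3 * p + 25 * C) * x 0 / D ^ 2)) (x 0)
  have hN : ∀ h : Euc n, 0 ≤ ‖h‖ ^ ((n : ℝ) + 2 * s) := fun h => by positivity
  have hself : cutQ x D p C r x = x 0 := by
    rw [cutQ_of_mem (by simpa using hr), polyQ_self]
  refine le_trans ?_ (trunc_symm_ge hs hε (cutQ_memL hs x D p C r) x hi ?_ ?_)
  · rw [he]; apply le_of_eq; field_simp; ring
  · intro h hh
    rw [radialBound_near (hh.trans_le hεr)]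
    refine div_nonpos_of_nonpos_of_nonneg ?_ (hN h)
    rw [neg_mul, neg_nonpos]; positivity
  · intro h
    rw [hself]
    rcases lt_or_ge ‖h‖ r with hh | hh
    · rw [radialBound_near hh]
      refine div_le_div_of_nonneg_right ?_ (hN h)
      have e : fourSum (cutQ x D p C r) x h = fourSum (polyQ x D p C) x h := by
        unfold fourSum
        rw [cutQ_of_mem (by simpa using hh), cutQ_of_mem (by simpa using hh),
          cutQ_of_mem (by simpa [refl_norm] using hh), cutQ_of_mem (by simpa [refl_norm] using hh)]
      rw [e]
      exact fourSum_polyQ hx hx1 hD hD1 hp hC (hh.le.trans hr1)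
    · rw [radialBound_far hh]
      refine div_le_div_of_nonneg_right ?_ (hN h)
      have hz : ∀ k : Euc n, ‖k‖ = ‖h‖ → cutQ x D p C r (x + k) ≤ 0 := by
        intro k hk
        have hnot : ¬ ‖x + k - x‖ < r := by simpa [hk] using hh
        by_cases hm : x + k ∈ cutSet x r
        · have h2 := (mem_cutSet.1 hm).resolve_left hnot
          have hy0 : (x + k) 0 ≤ 0 := by
            by_contra hcon
            push Not at hcon
            have h1 := norm_sub_le_refl hx hcon.le
            rw [← norm_sub_refl, norm_sub_rev, norm_sub_rev x (reflFirst n _)] at h1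
            exact hnot (h1.trans_lt h2)
          have h3 := hpos _ h2
          rw [refl_norm] at h3
          rw [cutQ, Set.indicator_of_mem hm, polyQ]
          exact mul_nonpos_of_nonpos_of_nonneg hy0 h3
        · rw [cutQ, Set.indicator_of_notMem hm]
      have z1 := hz h rfl
      have z2 := hz (-h) (norm_neg h)
      have z3 := hz _ (refl_norm h)
      have z4 := hz (-reflFirst n h) (by rw [norm_neg, refl_norm])
      unfold fourSum
      simp only [sub_eq_add_neg x]
      linarith

end upperBarrier

/-! ### Maximum principle arguments -/

lemma cns_pos (n : ℕ) {s : ℝ} (hs : 0 < s) (hs1 : s < 1) : 0 < cns n s := by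
  unfold cns
  have h1 : 0 < Real.Gamma (((n : ℝ) + 2 * s) / 2) := Real.Gamma_pos_of_pos (by positivity)
  have h2 : 0 < Real.Gamma (1 - s) := Real.Gamma_pos_of_pos (by linarith)
  have := Real.pi_pos
  positivity

lemma pv_contra_neg {n : ℕ} {s δ : ℝ} (hs : 0 < s) (hs1 : s < 1) {u : Euc n → ℝ} {x : Euc n}
    (hpv : HasPVFracLap n s u x 0) (hδ : 0 < δ)
    (h : ∀ᶠ ε in 𝓝[>] (0 : ℝ), truncInt n s u x ε ≤ -δ) : False := by
  have hc := cns_pos n hs hs1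
  have h1 : (0 : ℝ) ≤ cns n s * -δ :=
    le_of_tendsto hpv (h.mono fun ε hε => mul_le_mul_of_nonneg_left hε hc.le)
  nlinarith

lemma pv_contra_pos {n : ℕ} {s δ : ℝ} (hs : 0 < s) (hs1 : s < 1) {u : Euc n → ℝ} {x : Euc n}
    (hpv : HasPVFracLap n s u x 0) (hδ : 0 < δ)
    (h : ∀ᶠ ε in 𝓝[>] (0 : ℝ), δ ≤ truncInt n s u x ε) : False := by
  have hc := cns_pos n hs hs1
  have h1 : cns n s * δ ≤ (0 : ℝ) :=
    ge_of_tendsto hpv (h.mono fun ε hε => mul_le_mul_of_nonneg_left hε hc.le)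
  nlinarith

section maximum
variable {n : ℕ} [NeZero n]

lemma antisymm_zero {u : Euc n → ℝ} (hu : AntiSymmFn n u) {x : Euc n} (hx : x 0 = 0) : u x = 0 := by
  have h := hu x
  have e : reflFirst n x = x := by simp [reflFirst, hx]
  rw [e] at h
  linarith

lemma ANorm_nonneg (s : ℝ) (u : Euc n → ℝ) : 0 ≤ ANorm n s u := by
  refine setIntegral_nonneg measurableSet_halfSpace fun x hx => ?_
  have : 0 < x 0 := hx
  positivity

/-- At a negative minimum of an antisymmetric `v` over `ℝⁿ₊` the folded integrand is
controlled by `-v` against the weight of the `𝒜ₛ` norm. -/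
lemma fold_le_of_min {s ε : ℝ} (hs : 0 < s) (hε : 0 < ε) {v : Euc n → ℝ} {x y : Euc n}
    (hx : 0 < x 0) (hx1 : ‖x‖ ≤ 1) (hy : 0 < y 0) (hm : v x < 0) (hmin : v x ≤ v y)
    (hball : y ∈ ball x ε → v y < 0) :
    foldIntegrand s v x ε y ≤
      -(v y) * (2 * ((n : ℝ) + 2 * s) / 2 ^ ((n : ℝ) + 2 * s + 2) * x 0 *
        (y 0 / (1 + ‖y‖ ^ ((n : ℝ) + 2 * s + 2)))) := by
  have hN : 0 < (n : ℝ) + 2 * s := by positivity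
  set W := 2 * ((n : ℝ) + 2 * s) / 2 ^ ((n : ℝ) + 2 * s + 2) * x 0 *
        (y 0 / (1 + ‖y‖ ^ ((n : ℝ) + 2 * s + 2))) with hW
  have hW0 : 0 ≤ W := by positivity
  have hK' : 0 ≤ 1 / ‖reflFirst n x - y‖ ^ ((n : ℝ) + 2 * s) := by positivity
  unfold foldIntegrand
  by_cases hb : y ∈ ball x ε
  · rw [Set.indicator_of_notMem (by simpa using hb), zero_add, div_eq_mul_one_div]
    have h1 := hball hb
    nlinarith
  · rw [Set.indicator_of_mem (by simpa using hb)]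
    have hxy : x ≠ y := by
      rintro rfl; exact hb (mem_ball_self hε)
    have hk := kernel_lower hN hx hx1 hy hxy
    rw [← hW] at hk
    rw [div_eq_mul_one_div, div_eq_mul_one_div (v x + v y)]
    nlinarith

/-- At a positive maximum of an antisymmetric `v` over `B_r(x) ∩ ℝⁿ₊`, where `v` is
nonnegative further away, only the far part contributes negatively to the folded integrand. -/
lemma fold_ge_of_max {s ε r : ℝ} (hs : 0 < s) (hε : 0 < ε) (hr : 0 < r) (hr1 : r ≤ 1) {v : Euc n → ℝ} {x y : Euc n} {U : ℝ} (hU : 0 ≤ U)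
    (hx : 0 < x 0) (hx1 : ‖x‖ ≤ 1) (hy : 0 < y 0) (hm : 0 < v x)
    (hnear : ‖y - x‖ < r → v y ≤ v x) (hfar : r ≤ ‖y - x‖ → v y = U)
    (hball : y ∈ ball x ε → 0 ≤ v x + v y) :
    -U * (4 * ((n : ℝ) + 2 * s) * (3 / r) ^ ((n : ℝ) + 2 * s + 2) * x 0 *
        (y 0 / (1 + ‖y‖ ^ ((n : ℝ) + 2 * s + 2)))) ≤ foldIntegrand s v x ε y := by
  have hN : 0 < (n : ℝ) + 2 * s := by positivity
  set W := 4 * ((n : ℝ) + 2 * s) * (3 / r) ^ ((n : ℝ) + 2 * s + 2) * x 0 *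
        (y 0 / (1 + ‖y‖ ^ ((n : ℝ) + 2 * s + 2))) with hW
  have hW0 : 0 ≤ W := by positivity
  have hUW : 0 ≤ U * W := by positivity
  have hK' : 0 ≤ 1 / ‖reflFirst n x - y‖ ^ ((n : ℝ) + 2 * s) := by positivity
  have hK : 0 ≤ 1 / ‖x - y‖ ^ ((n : ℝ) + 2 * s) := by positivity
  unfold foldIntegrand
  by_cases hb : y ∈ ball x ε
  · rw [Set.indicator_of_notMem (by simpa using hb), zero_add, div_eq_mul_one_div]
    have h1 := mul_nonneg (hball hb) hK'
    linarith
  · rw [Set.indicator_of_mem (by simpa using hb), div_eq_mul_one_div,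
      div_eq_mul_one_div (v x + v y)]
    rcases lt_or_ge ‖y - x‖ r with h | h
    · have hxy : x ≠ y := by
        rintro rfl; exact hb (mem_ball_self hε)
      have hk := kernel_lower hN hx hx1 hy hxy
      have hk0 : 0 ≤ 1 / ‖x - y‖ ^ ((n : ℝ) + 2 * s) -
          1 / ‖reflFirst n x - y‖ ^ ((n : ℝ) + 2 * s) := le_trans (by positivity) hk
      have h1 := mul_nonneg (sub_nonneg.2 (hnear h)) hk0
      have h2 := mul_nonneg hm.le hK'
      linarith
    · have hk := kernel_upper hN hr hr1 hx hx1 hy (by rwa [norm_sub_rev])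
      rw [← hW] at hk
      rw [hfar h]
      have h1 := mul_le_mul_of_nonneg_left hk hU
      have h2 := mul_nonneg hm.le hK'
      have h3 := mul_nonneg hm.le hK
      linarith

end maximum

section lower
variable {n : ℕ} [NeZero n]

/-- The lower barrier bound `u ≥ c ‖u‖ φ`. -/
lemma lower_bound {s : ℝ} (hs : 0 < s) (hs1 : s < 1) : ∃ c : ℝ, 0 < c ∧
    ∀ u : Euc n → ℝ, ContinuousOn u (ball 0 1) → MemL n s u → AntiSymmFn n u →
      (∀ x ∈ halfSpace n, 0 ≤ u x) →
      (∀ x ∈ ball (0 : Euc n) 1 ∩ halfSpace n, HasPVFracLap n s u x 0) →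
      ∀ x ∈ halfSpace n, c * ANorm n s u * phi x ≤ u x := by
  obtain ⟨C, hC, hphi⟩ := trunc_phi_le (n := n) hs hs1
  set c₀ : ℝ := 2 * ((n : ℝ) + 2 * s) / 2 ^ ((n : ℝ) + 2 * s + 2) with hc₀
  have hc₀p : 0 < c₀ := by positivity
  have hA := ANorm_nonneg (n := n) s phi
  set A := ANorm n s (phi : Euc n → ℝ) with hAdef
  refine ⟨c₀ / (2 * (C + c₀ * A + 1)), by positivity, ?_⟩
  intro u hcont hu ha hpos hpv
  have hUn := ANorm_nonneg s u
  set t := c₀ / (2 * (C + c₀ * A + 1)) * ANorm n s u with ht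
  have ht0 : 0 ≤ t := by positivity
  have htle : t * (c₀ * A + C) ≤ c₀ * ANorm n s u / 2 := by
    have e : t * (2 * (C + c₀ * A + 1)) = c₀ * ANorm n s u := by
      rw [ht]; field_simp
    nlinarith
  by_contra! hcon
  obtain ⟨x₁, hx₁, hneg⟩ := hcon
  have hx₁p : 0 < x₁ 0 := hx₁
  have hUpos : 0 < ANorm n s u := by
    rcases hUn.eq_or_lt with h | h
    · rw [ht, ← h] at hneg
      have := hpos x₁ hx₁
      simp at hneg
      linarith
    · exact h
  set v : Euc n → ℝ := fun x => u x - t * phi x with hv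
  have hv1 : v x₁ < 0 := by simp only [hv]; linarith
  have hva : AntiSymmFn n v := fun x => by
    simp only [hv, ha x, phi_antisymm x]; ring
  have hout : ∀ x ∈ halfSpace n, 3 / 4 ≤ ‖x‖ → 0 ≤ v x := fun x hx h => by
    simp only [hv, phi, hat_eq_zero h]
    simpa using hpos x hx
  have hsub : ∀ x : Euc n, ‖x‖ ≤ 3 / 4 → x ∈ ball (0 : Euc n) 1 := fun x h => by
    rw [mem_ball, dist_zero_right]; linarith
  set K : Set (Euc n) := closedBall 0 (3 / 4) ∩ {x | 0 ≤ x 0} with hK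
  have hKc : IsCompact K :=
    (isCompact_closedBall _ _).inter_right (isClosed_le continuous_const continuous_coord)
  have hvc : ContinuousOn v (ball 0 1) :=
    hcont.sub (phi_continuous.const_mul t).continuousOn
  have hx₁K : x₁ ∈ K := by
    refine ⟨?_, hx₁p.le⟩
    rw [mem_closedBall, dist_zero_right]
    by_contra h
    push Not at h
    linarith [hout x₁ hx₁ h.le]
  obtain ⟨x, hxK, hxmin⟩ := hKc.exists_isMinOn ⟨x₁, hx₁K⟩
    (hvc.mono fun x hx => hsub x (by simpa using hx.1))
  have hvx : v x < 0 := (hxmin hx₁K).trans_lt hv1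
  have hx34 : ‖x‖ ≤ 3 / 4 := by simpa using hxK.1
  have hx0 : 0 < x 0 := by
    rcases (show 0 ≤ x 0 from hxK.2).eq_or_lt with h | h
    · linarith [antisymm_zero hva h.symm]
    · exact h
  have hxlt : ‖x‖ < 3 / 4 := by
    by_contra h
    push Not at h
    linarith [hout x hx0 h]
  have hmin : ∀ y ∈ halfSpace n, v x ≤ v y := by
    intro y hy
    rcases le_total ‖y‖ (3 / 4) with h | h
    · exact hxmin ⟨by simpa using h, (show 0 < y 0 from hy).le⟩
    · linarith [hout y hy h]
  have hcx : ContinuousAt v x := hvc.continuousAt (isOpen_ball.mem_nhds (hsub x hx34))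
  obtain ⟨η, hη, hball⟩ := Metric.eventually_nhds_iff_ball.1 (hcx.eventually_lt_const hvx)
  have hmemv : MemL n s v := hu.sub_mul (phi_memL hs) t
  refine pv_contra_neg hs hs1 (hpv x ⟨hsub x hx34, hx0⟩)
    (δ := c₀ * x 0 * ANorm n s u / 2) (by positivity) ?_
  filter_upwards [Ioo_mem_nhdsGT (lt_min hη hx0)] with ε hε
  have hε0 : 0 < ε := hε.1
  have hεη : ε < η := hε.2.trans_le (min_le_left _ _)
  have hεx : ε ≤ x 0 := (hε.2.trans_le (min_le_right _ _)).le
  have hBu := (integrableOn_ANorm hs hu).const_mul (-(c₀ * x 0))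
  have hBp := (integrableOn_ANorm (n := n) hs (phi_memL hs)).const_mul (t * (c₀ * x 0))
  have h1 := trunc_le hs hε0 hmemv hva hεx (hBu.add hBp) ?_
  · have h2 := hphi x hx0 hxlt ε hε0
    rw [truncInt_split hs hε0 hu (phi_memL hs) t x]
    have h3 : ∫ y in halfSpace n, ((fun y : Euc n => -(c₀ * x 0) *
        (y 0 * |u y| / (1 + ‖y‖ ^ ((n : ℝ) + 2 * s + 2)))) + fun y : Euc n => t * (c₀ * x 0) *
        (y 0 * |phi y| / (1 + ‖y‖ ^ ((n : ℝ) + 2 * s + 2)))) y =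
        -(c₀ * x 0) * ANorm n s u + t * (c₀ * x 0) * A := by
      rw [integral_add' hBu hBp, integral_const_mul, integral_const_mul]
      rfl
    rw [h3] at h1
    have h4 := mul_le_mul_of_nonneg_left h2 ht0
    have h5 := mul_le_mul_of_nonneg_right htle hx0.le
    linarith
  · intro y hy
    have hy0 : 0 < y 0 := hy
    have hp := fold_le_of_min (s := s) (ε := ε) hs hε0 hx0 (by linarith) hy0 hvx (hmin y hy)
      (fun hb => hball y (ball_subset_ball hεη.le hb))
    refine hp.trans (le_of_eq ?_)
    have hphi0 : 0 ≤ phi y := mul_nonneg hy0.le (hat_nonneg _)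
    simp only [Pi.add_apply]
    rw [abs_of_nonneg (hpos y hy), abs_of_nonneg hphi0, ← hc₀]
    simp only [hv]
    ring

end lower

section upper
variable {n : ℕ} [NeZero n]

/-- If `u ≤ t x₁ (9/16 - |x|²)^(-p)` fails somewhere in `B_{3/4}⁺`, then the difference attains
a positive maximum there. -/
lemma exists_touching {u : Euc n → ℝ} (hcont : ContinuousOn u (ball 0 1)) (ha : AntiSymmFn n u)
    {p : ℕ} (hp : p ≠ 0) {t : ℝ} (ht : 0 < t) {x₁ : Euc n} (hx₁ : 0 < x₁ 0) (hx₁n : ‖x₁‖ < 3 / 4)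
    (hlt : t * (x₁ 0 / (9 / 16 - ‖x₁‖ ^ 2) ^ p) < u x₁) :
    ∃ (x : Euc n) (m : ℝ), 0 < x 0 ∧ ‖x‖ < 3 / 4 ∧ 0 < m ∧
      u x = m + t * (x 0 / (9 / 16 - ‖x‖ ^ 2) ^ p) ∧
      ∀ y : Euc n, 0 < y 0 → ‖y‖ < 3 / 4 → u y ≤ m + t * (y 0 / (9 / 16 - ‖y‖ ^ 2) ^ p) := by
  set w : Euc n → ℝ := fun x => u x - t * (x 0 / (9 / 16 - ‖x‖ ^ 2) ^ p) with hw
  set w₁ := w x₁ with hw₁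
  have hw₁p : 0 < w₁ := by simp only [hw₁, hw]; linarith
  have hDpos : ∀ y : Euc n, ‖y‖ < 3 / 4 → 0 < 9 / 16 - ‖y‖ ^ 2 := fun y hy => by
    nlinarith [norm_nonneg y]
  set K : Set (Euc n) := closedBall 0 (3 / 4) ∩ {x | 0 ≤ x 0} with hK
  have hKc : IsCompact K :=
    (isCompact_closedBall _ _).inter_right (isClosed_le continuous_const continuous_coord)
  have huK : ContinuousOn u K := hcont.mono fun x hx => by
    have := hx.1
    rw [mem_closedBall] at this
    rw [mem_ball]; linarith
  set f : Euc n → ℝ × ℝ := fun x =>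
    (u x - w₁, (u x - w₁) * (9 / 16 - ‖x‖ ^ 2) ^ p - t * x 0) with hf
  have hfK : ContinuousOn f K := by
    refine ContinuousOn.prodMk (huK.sub continuousOn_const) ?_
    refine ContinuousOn.sub (ContinuousOn.mul (huK.sub continuousOn_const) ?_) ?_
    · exact Continuous.continuousOn (by fun_prop)
    · exact Continuous.continuousOn (by fun_prop)
  -- superlevel set of the difference, written without division so that it is closed
  set S : Set (Euc n) := K ∩ f ⁻¹' (Set.Ici 0 ×ˢ Set.Ici 0) with hS
  have hSc : IsCompact S := hKc.of_isClosed_subset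
    (hfK.preimage_isClosed_of_isClosed hKc.isClosed (isClosed_Ici.prod isClosed_Ici))
    Set.inter_subset_left
  have hSgood : ∀ x ∈ S, 0 < x 0 ∧ ‖x‖ < 3 / 4 := by
    rintro x ⟨⟨h1, h2⟩, h3, h4⟩
    simp only [hf, Set.mem_Ici] at h3 h4
    have h2' : 0 ≤ x 0 := h2
    have hn : ‖x‖ ≤ 3 / 4 := by simpa using h1
    have hx0 : 0 < x 0 := by
      rcases h2'.eq_or_lt with h | h
      · linarith [antisymm_zero ha h.symm]
      · exact h
    refine ⟨hx0, ?_⟩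
    rcases hn.eq_or_lt with h | h
    · rw [h] at h4
      norm_num [hp] at h4
      nlinarith
    · exact h
  have hSmem : ∀ y : Euc n, 0 < y 0 → ‖y‖ < 3 / 4 → w₁ ≤ w y → y ∈ S := by
    intro y hy hyn hwy
    have hD := hDpos y hyn
    have hDp : 0 < (9 / 16 - ‖y‖ ^ 2) ^ p := by positivity
    have hq : 0 ≤ t * (y 0 / (9 / 16 - ‖y‖ ^ 2) ^ p) := by positivity
    simp only [hw] at hwy
    refine ⟨⟨by simpa using hyn.le, hy.le⟩, ?_, ?_⟩
    · simp only [hf, Set.mem_Ici]; linarith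
    · simp only [hf, Set.mem_Ici]
      have h1 : t * (y 0 / (9 / 16 - ‖y‖ ^ 2) ^ p) ≤ u y - w₁ := by linarith
      have h2 := mul_le_mul_of_nonneg_right h1 hDp.le
      have h3 : t * (y 0 / (9 / 16 - ‖y‖ ^ 2) ^ p) * (9 / 16 - ‖y‖ ^ 2) ^ p = t * y 0 := by
        rw [mul_assoc, div_mul_cancel₀ _ hDp.ne']
      linarith
  have hwS : ContinuousOn w S := by
    refine ContinuousOn.sub (huK.mono Set.inter_subset_left) ?_
    refine ContinuousOn.mul continuousOn_const (ContinuousOn.div ?_ ?_ ?_)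
    · exact Continuous.continuousOn (by fun_prop)
    · exact Continuous.continuousOn (by fun_prop)
    · intro x hx
      exact (pow_pos (hDpos x (hSgood x hx).2) p).ne'
  obtain ⟨x, hxS, hmax⟩ := hSc.exists_isMaxOn ⟨x₁, hSmem x₁ hx₁ hx₁n le_rfl⟩ hwS
  have hx1x : w₁ ≤ w x := hmax (hSmem x₁ hx₁ hx₁n le_rfl)
  refine ⟨x, w x, (hSgood x hxS).1, (hSgood x hxS).2, hw₁p.trans_le hx1x, by simp only [hw]; ring,
    fun y hy hyn => ?_⟩
  have : w y ≤ w x := by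
    rcases le_total w₁ (w y) with h | h
    · exact hmax (hSmem y hy hyn h)
    · exact h.trans hx1x
  simp only [hw] at this ⊢
  linarith

lemma norm_sq_sub_le {x y : Euc n} {r : ℝ} (hx : ‖x‖ < 3 / 4) (hr : r ≤ 1 / 8)
    (hy : ‖y - x‖ < r) : |‖y‖ ^ 2 - ‖x‖ ^ 2| ≤ 2 * r := by
  have h1 : |‖y‖ - ‖x‖| ≤ r := (abs_norm_sub_norm_le y x).trans hy.le
  have h2 := (abs_le.1 h1).2
  have h3 : |‖y‖ + ‖x‖| ≤ 2 := by
    rw [abs_of_nonneg (by positivity)]; linarith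
  have e : ‖y‖ ^ 2 - ‖x‖ ^ 2 = (‖y‖ - ‖x‖) * (‖y‖ + ‖x‖) := by ring
  rw [e, abs_mul]
  have := mul_le_mul h1 h3 (abs_nonneg _) ((abs_nonneg _).trans h1)
  linarith

set_option maxHeartbeats 1000000 in
/-- The upper barrier bound `u ≤ C ‖u‖ x₁ (9/16 - |x|²)^(-n-2)`. -/
lemma upper_bound {s : ℝ} (hs : 0 < s) (hs1 : s < 1) : ∃ C : ℝ, 0 ≤ C ∧
    ∀ u : Euc n → ℝ, ContinuousOn u (ball 0 1) → MemL n s u → AntiSymmFn n u →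
      (∀ x ∈ halfSpace n, 0 ≤ u x) →
      (∀ x ∈ ball (0 : Euc n) 1 ∩ halfSpace n, HasPVFracLap n s u x 0) →
      ∀ t : ℝ, C * ANorm n s u < t → ∀ x ∈ halfSpace n, ‖x‖ < 3 / 4 →
        u x ≤ t * (x 0 / (9 / 16 - ‖x‖ ^ 2) ^ (n + 2)) := by
  obtain ⟨C₁, hC₁, hexp⟩ := inv_pow_le (n + 2)
  have hnear := nearConst_nonneg n s
  have hfar := farConst_pos (n := n) hs
  set p : ℝ := ((n + 2 : ℕ) : ℝ) with hp
  have hp0 : 0 ≤ p := Nat.cast_nonneg _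
  set M := (3 * p + 25 * C₁) * nearConst n s with hM
  have hM0 : 0 ≤ M := by positivity
  -- radius of the comparison ball relative to `D = 9/16 - |x|²`
  set θ : ℝ := min (1 / 8) (farConst n s / (2 * (M + 1))) with hθ
  have hθ0 : 0 < θ := by positivity
  have hθ8 : θ ≤ 1 / 8 := min_le_left _ _
  have hθM : M * θ ^ 2 ≤ farConst n s / 2 := by
    have h1 : θ ≤ farConst n s / (2 * (M + 1)) := min_le_right _ _
    rw [le_div_iff₀ (by positivity)] at h1
    have h2 : θ ^ 2 ≤ θ := by nlinarith
    have h3 := mul_le_mul_of_nonneg_left h2 hM0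
    nlinarith
  have hN : 0 < (n : ℝ) + 2 * s := by positivity
  set G := 4 * ((n : ℝ) + 2 * s) * (3 / θ) ^ ((n : ℝ) + 2 * s + 2) with hG
  set H := θ ^ (-(2 * s)) * (farConst n s / 2) with hH
  have hG0 : 0 < G := by positivity
  have hH0 : 0 < H := by positivity
  refine ⟨G / H, by positivity, ?_⟩
  intro u hcont hu ha hpos hpv t ht x₁ hx₁ hx₁n
  have hUn := ANorm_nonneg s u
  have ht0 : 0 < t := lt_of_le_of_lt (by positivity) ht
  have htH : G * ANorm n s u < t * H := by
    rw [div_mul_eq_mul_div, div_lt_iff₀ hH0] at ht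
    exact ht
  by_contra! hcon
  obtain ⟨x, m, hx0, hxn, hm, hux, hmax⟩ :=
    exists_touching hcont ha (by omega : n + 2 ≠ 0) ht0 hx₁ hx₁n hcon
  set D := 9 / 16 - ‖x‖ ^ 2 with hD
  have hD0 : 0 < D := by nlinarith [norm_nonneg x]
  have hD1 : D ≤ 1 := by nlinarith [sq_nonneg ‖x‖]
  set r := θ * D with hr
  have hr0 : 0 < r := by positivity
  have hr8 : r ≤ 1 / 8 :=
    (mul_le_of_le_one_right hθ0.le hD1).trans hθ8
  set κ := t / D ^ (n + 2) with hκ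
  have hκ0 : 0 < κ := by positivity
  have hz : ∀ y : Euc n, ‖y - x‖ < r → |(‖y‖ ^ 2 - ‖x‖ ^ 2) / D| ≤ 1 / 2 := by
    intro y hy
    have h1 := norm_sq_sub_le hxn hr8 hy
    have h2 : r ≤ 1 / 8 * D := mul_le_mul_of_nonneg_right hθ8 hD0.le
    rw [abs_div, abs_of_pos hD0, div_le_iff₀ hD0]
    linarith
  have hfac : ∀ y : Euc n, ‖y - x‖ < r →
      1 / (1 - (‖y‖ ^ 2 - ‖x‖ ^ 2) / D) ^ (n + 2) ≤
        1 + p * ((‖y‖ ^ 2 - ‖x‖ ^ 2) / D) + C₁ * ((‖y‖ ^ 2 - ‖x‖ ^ 2) / D) ^ 2 :=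
    fun y hy => hexp _ (hz y hy)
  have hfac0 : ∀ y : Euc n, ‖y - x‖ < r →
      0 < 1 - (‖y‖ ^ 2 - ‖x‖ ^ 2) / D := fun y hy => by
    linarith [(abs_le.1 (hz y hy)).2]
  have hcmp : ∀ y : Euc n, 0 < y 0 → ‖y - x‖ < r → u y ≤ m + κ * polyQ x D p C₁ y := by
    intro y hy hyr
    have e : 9 / 16 - ‖y‖ ^ 2 = D * (1 - (‖y‖ ^ 2 - ‖x‖ ^ 2) / D) := by
      rw [mul_sub, mul_div_cancel₀ _ hD0.ne', hD]; ring
    have hpos' : 0 < 9 / 16 - ‖y‖ ^ 2 := by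
      rw [e]; exact mul_pos hD0 (hfac0 y hyr)
    have hyn : ‖y‖ < 3 / 4 := by nlinarith [norm_nonneg y]
    refine (hmax y hy hyn).trans ?_
    rw [e, mul_pow, polyQ]
    have h1 := mul_le_mul_of_nonneg_left (hfac y hyr) (by positivity : 0 ≤ κ * y 0)
    have h2 : t * (y 0 / (D ^ (n + 2) * (1 - (‖y‖ ^ 2 - ‖x‖ ^ 2) / D) ^ (n + 2))) =
        κ * y 0 * (1 / (1 - (‖y‖ ^ 2 - ‖x‖ ^ 2) / D) ^ (n + 2)) := by
      rw [hκ, div_mul_eq_div_mul_one_div]; ring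
    rw [h2]
    linarith
  set v : Euc n → ℝ := fun y => u y - κ * cutQ x D p C₁ r y with hv
  have hxx : ‖x - x‖ < r := by simpa using hr0
  have hvx : v x = m := by
    simp only [hv]
    rw [cutQ_of_mem hxx, polyQ_self, hux, hκ]; ring
  have hva : AntiSymmFn n v := fun y => by
    simp only [hv, ha y, cutQ_antisymm x D p C₁ r y]; ring
  have hmemv : MemL n s v := hu.sub_mul (cutQ_memL hs x D p C₁ r) κ
  have hxb : x ∈ ball (0 : Euc n) 1 := by
    rw [mem_ball, dist_zero_right]; linarith
  have hcx : ContinuousAt (fun y => m + (u y - κ * polyQ x D p C₁ y)) x :=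
    continuousAt_const.add ((hcont.continuousAt (isOpen_ball.mem_nhds hxb)).sub
      (continuousAt_const.mul (polyQ_continuous x D p C₁).continuousAt))
  have hval : 0 < m + (u x - κ * polyQ x D p C₁ x) := by
    have := hvx
    simp only [hv] at this
    rw [cutQ_of_mem hxx] at this
    linarith
  obtain ⟨η, hη, hball⟩ := Metric.eventually_nhds_iff_ball.1 (hcx.eventually_const_lt hval)
  -- both competing terms scale like `D ^ (-(n + 2s + 2))`
  have hscale : 4 * ((n : ℝ) + 2 * s) * (3 / r) ^ ((n : ℝ) + 2 * s + 2) =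
      G * (D ^ (-(2 * s)) / D ^ (n + 2)) := by
    have e1 : (3 / r) = 3 / θ * D⁻¹ := by rw [hr]; field_simp
    have e2 : D ^ ((n : ℝ) + 2 * s + 2) = D ^ (2 * s) * D ^ (n + 2) := by
      rw [← Real.rpow_natCast D (n + 2), ← Real.rpow_add hD0]
      congr 1; push_cast; ring
    rw [e1, Real.mul_rpow (by positivity) (by positivity), Real.inv_rpow hD0.le, e2,
      Real.rpow_neg hD0.le, hG]
    field_simp
  have hscale2 : κ * (r ^ (-(2 * s)) * (farConst n s / 2)) =
      t * H * (D ^ (-(2 * s)) / D ^ (n + 2)) := by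
    rw [hr, Real.mul_rpow hθ0.le hD0.le, hκ, hH]; ring
  set E := D ^ (-(2 * s)) / D ^ (n + 2) with hE
  have hE0 : 0 < E := by positivity
  refine pv_contra_pos hs hs1 (hpv x ⟨hxb, hx0⟩)
    (δ := (t * H - G * ANorm n s u) * (E * x 0))
    (mul_pos (by linarith) (by positivity)) ?_
  filter_upwards [Ioo_mem_nhdsGT (lt_min hη (lt_min hx0 hr0))] with ε hε
  have hε0 : 0 < ε := hε.1
  have hεη : ε < η := hε.2.trans_le (min_le_left _ _)
  have hεx : ε ≤ x 0 := (hε.2.trans_le ((min_le_right _ _).trans (min_le_left _ _))).le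
  have hεr : ε ≤ r := (hε.2.trans_le ((min_le_right _ _).trans (min_le_right _ _))).le
  have hBu := (integrableOn_ANorm hs hu).const_mul (-(G * E * x 0))
  have h1 := trunc_ge hs hε0 hmemv hva hεx hBu ?_
  · have h2 := trunc_cutQ_ge hs hs1 hx0 (by linarith) hD0 hD1 hp0 hC₁ hr0 (by linarith)
      (fun y hy => le_trans (by have := hfac0 y hy; positivity) (hfac y hy)) hε0 hεr
    have h3 : r ^ (-(2 * s)) * x 0 * (farConst n s / 2) ≤
        truncInt n s (cutQ x D p C₁ r) x ε := by
      refine le_trans (mul_le_mul_of_nonneg_left ?_ (by positivity)) h2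
      have e : r / D = θ := by rw [hr]; field_simp
      rw [e]
      have : (3 * p + 25 * C₁) * θ ^ 2 * nearConst n s = M * θ ^ 2 := by rw [hM]; ring
      linarith
    rw [integral_const_mul] at h1
    change -(G * E * x 0) * ANorm n s u ≤ _ at h1
    rw [truncInt_split hs hε0 hu (cutQ_memL hs x D p C₁ r) κ x]
    have h4 := mul_le_mul_of_nonneg_left h3 hκ0.le
    have h5 : κ * (r ^ (-(2 * s)) * x 0 * (farConst n s / 2)) = t * H * E * x 0 := by
      rw [← hscale2]; ring
    rw [h5] at h4
    linarith
  · intro y hy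
    have hy0 : 0 < y 0 := hy
    have hp := fold_ge_of_max (s := s) (ε := ε) (v := v) (x := x) (U := u y) hs hε0 hr0
      (by linarith) (hpos y hy) hx0 (by linarith) hy0 (by rw [hvx]; exact hm)
      (fun h => by
        rw [hvx]; simp only [hv]
        rw [cutQ_of_mem h]; linarith [hcmp y hy0 h])
      (fun h => by simp only [hv]; rw [cutQ_of_far hx0 hy0 h]; ring)
      (fun hb => by
        have h6 := hball y (ball_subset_ball hεη.le hb)
        have h7 : ‖y - x‖ < r := by
          rw [mem_ball, dist_eq_norm] at hb; linarith
        rw [hvx]; simp only [hv]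
        rw [cutQ_of_mem h7]; exact h6.le)
    refine le_trans (le_of_eq ?_) hp
    rw [abs_of_nonneg (hpos y hy), hscale]
    ring

end upper

/-- boundary Harnack inequality for antisymmetric `s`-harmonic
functions, `c ≡ 0`, `u ∈ ℒₛ(ℝⁿ)` (Theorem B.1). -/
theorem stmt19
    (n : ℕ) [NeZero n] (s : ℝ) (hs : s ∈ Set.Ioo (0 : ℝ) 1) :
    ∃ C : ℝ, 1 ≤ C ∧
      ∀ (u : Euc n → ℝ) (α : ℝ),
        0 < α → NotInteger (2 * s + α) →
        MemHolderOn (2 * s + α) (Metric.ball (0 : Euc n) 1) u →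
        MemL n s u →
        AntiSymmFn n u →
        (∀ x ∈ halfSpace n, 0 ≤ u x) →
        (∀ x ∈ Metric.ball (0 : Euc n) 1 ∩ halfSpace n, HasPVFracLap n s u x 0) →
        (∀ x ∈ Metric.ball (0 : Euc n) (1 / 2) ∩ halfSpace n,
          ∀ y ∈ Metric.ball (0 : Euc n) (1 / 2) ∩ halfSpace n,
          u x / x 0 ≤ C * (u y / y 0)) ∧
        (∀ x ∈ Metric.ball (0 : Euc n) (1 / 2) ∩ halfSpace n,
          C⁻¹ * ANorm n s u ≤ u x / x 0 ∧ u x / x 0 ≤ C * ANorm n s u) := by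
  obtain ⟨c, hc, hlow⟩ := lower_bound (n := n) hs.1 hs.2
  obtain ⟨C₂, hC₂, hupp⟩ := upper_bound (n := n) hs.1 hs.2
  -- `L` bounds both constants, and the two-sided estimate through `‖u‖` squares it
  set L : ℝ := 1 + C₂ * (16 / 5) ^ (n + 2) + (c * (5 / 16))⁻¹ with hL
  have hi : 0 < (c * (5 / 16))⁻¹ := by positivity
  have hj : 0 ≤ C₂ * (16 / 5) ^ (n + 2) := by positivity
  have hL1 : 1 ≤ L := by linarith
  have hL0 : 0 < L := by linarith
  have hLL : L ≤ L ^ 2 := by nlinarith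
  refine ⟨L ^ 2, hL1.trans hLL, ?_⟩
  intro u α _ _ hhol hu ha hpos hpv
  have hcont : ContinuousOn u (ball 0 1) := hhol.1.continuousOn
  have hUn := ANorm_nonneg s u
  have hhalf : ∀ x ∈ ball (0 : Euc n) (1 / 2), 5 / 16 ≤ 9 / 16 - ‖x‖ ^ 2 := fun x hx => by
    rw [mem_ball, dist_zero_right] at hx
    nlinarith [norm_nonneg x]
  have lo : ∀ x ∈ ball (0 : Euc n) (1 / 2) ∩ halfSpace n, L⁻¹ * ANorm n s u ≤ u x / x 0 := by
    rintro x ⟨hxb, hx⟩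
    have hx0 : 0 < x 0 := hx
    rw [le_div_iff₀ hx0]
    refine le_trans ?_ (hlow u hcont hu ha hpos hpv x hx)
    have h1 : x 0 * (5 / 16) ≤ phi x :=
      mul_le_mul_of_nonneg_left ((hhalf x hxb).trans (le_max_left _ _)) hx0.le
    have h2 : L⁻¹ ≤ c * (5 / 16) := by
      rw [inv_le_comm₀ hL0 (by positivity)]; linarith
    have h3 := mul_le_mul_of_nonneg_left h1 (by positivity : 0 ≤ c * ANorm n s u)
    have h4 := mul_le_mul_of_nonneg_right h2 (by positivity : 0 ≤ ANorm n s u * x 0)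
    linarith
  have up : ∀ x ∈ ball (0 : Euc n) (1 / 2) ∩ halfSpace n, u x / x 0 ≤ L * ANorm n s u := by
    rintro x ⟨hxb, hx⟩
    have hx0 : 0 < x 0 := hx
    have hxn : ‖x‖ < 3 / 4 := by
      rw [mem_ball, dist_zero_right] at hxb; linarith
    have hD := hhalf x hxb
    rw [div_le_iff₀ hx0]
    have h1 : u x ≤ C₂ * ANorm n s u * (x 0 / (9 / 16 - ‖x‖ ^ 2) ^ (n + 2)) := by
      have hq : 0 < x 0 / (9 / 16 - ‖x‖ ^ 2) ^ (n + 2) := by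
        have : 0 < 9 / 16 - ‖x‖ ^ 2 := by linarith
        positivity
      rw [← div_le_iff₀ hq]
      refine le_of_forall_gt_imp_ge_of_dense fun t ht => ?_
      rw [div_le_iff₀ hq]
      exact hupp u hcont hu ha hpos hpv t ht x hx hxn
    have h2 : x 0 / (9 / 16 - ‖x‖ ^ 2) ^ (n + 2) ≤ x 0 * (16 / 5) ^ (n + 2) := by
      have h5 : x 0 / (9 / 16 - ‖x‖ ^ 2) ^ (n + 2) ≤ x 0 / (5 / 16) ^ (n + 2) := by gcongr
      refine h5.trans (le_of_eq ?_)
      rw [div_eq_mul_inv, ← inv_pow]; norm_num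
    have h3 := mul_le_mul_of_nonneg_left h2 (by positivity : 0 ≤ C₂ * ANorm n s u)
    have h4 : C₂ * (16 / 5) ^ (n + 2) ≤ L := by linarith
    have h6 := mul_le_mul_of_nonneg_right h4 (by positivity : 0 ≤ ANorm n s u * x 0)
    linarith
  refine ⟨fun x hx y hy => ?_, fun x hx => ⟨?_, ?_⟩⟩
  · refine (up x hx).trans ?_
    have h1 := mul_le_mul_of_nonneg_left (lo y hy) (by positivity : 0 ≤ L ^ 2)
    have h2 : L ^ 2 * (L⁻¹ * ANorm n s u) = L * ANorm n s u := by field_simp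
    linarith
  · refine le_trans ?_ (lo x hx)
    gcongr
  · refine (up x hx).trans ?_
    gcongr

end
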